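/- arXiv:1407.8128 — 3 statements merged into one kernel-verified Lean document; each statement's English description precedes it below -/
import Mathlib

section
/- Let q = p^f be a prime power, let F_q be a finite field with q elements, and let G = PSp_8(q) be the quotient of Sp_8(q) = Matrix.symplecticGroup (Fin 4) F_q by its center. Let x ∈ G be an element of odd prime order r with r ≠ p, let i be the least positive integer a such that r divides q^a − 1, and let s ≠ p be a prime dividing the cardinality of the centralizer of x in G. Then: if i = 8 then s divides q^4 + 1; if i = 4 then s divides q^4 − 1; if i = 6 then s divides (q − 1)(q^3 + 1); if i = 3 then s divides (q + 1)(q^3 − 1); and if i ∈ {1, 2} then s divides (q^2 + 1)(q^6 − 1). -/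
/-!
If `s = 2`, only parity matters, and if `s = r`, then `r ∣ q ^ i - 1` suffices. So let `s` be odd
and different from `r`. An element of order `s` in the centralizer of `x` yields an element of order
`r * s` in `PSp₈(q)`, and this lifts to an element `g` of order `r * s` of `Sp₈(q)`, because the
center has exponent dividing `2`. The eigenvalues of `g` are permuted by the Frobenius `u ↦ u ^ q`
and, `g` being symplectic, by inversion. So with an eigenvalue of order `n` there are at least
`|⟨q, -1⟩|` of this order, where `⟨q, -1⟩ ≤ (ℤ/n)ˣ`. As `g` is semisimple of order `r * s`, it has
an eigenvalue of order `r * s`, or eigenvalues of both orders `r` and `s`. There being at most eight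
eigenvalues, this leaves few possibilities for the orders of `q` modulo `r` and modulo `s`.
-/

open Matrix Polynomial

section SignedOrder

open Classical in
/-- For `q` coprime to `n`, the order of the group of units modulo `n` generated by `q` and `-1`,
i.e. the size of an orbit of elements of order `n` under inversion and `q`-th powers. -/
noncomputable def signedOrder (q n : ℕ) : ℕ :=
  if ∃ k, (q : ZMod n) ^ k = -1 then orderOf (q : ZMod n) else 2 * orderOf (q : ZMod n)

variable {G : Type*} [Group G] {S : Set G} {q : ℕ}

lemma pow_pow_mem (hpow : ∀ u ∈ S, u ^ q ∈ S) {u : G} (hu : u ∈ S) (k : ℕ) : u ^ q ^ k ∈ S := by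
  induction k with
  | zero => simpa using hu
  | succ k ih => simpa only [pow_succ, pow_mul] using hpow _ ih

lemma pow_pow_eq_pow_pow_iff (u : G) (a b : ℕ) :
    u ^ q ^ a = u ^ q ^ b ↔ (q : ZMod (orderOf u)) ^ a = (q : ZMod (orderOf u)) ^ b := by
  rw [pow_eq_pow_iff_modEq, ← ZMod.natCast_eq_natCast_iff, Nat.cast_pow, Nat.cast_pow]

lemma pow_pow_eq_inv_pow_pow_iff (u : G) (a b : ℕ) :
    u ^ q ^ a = (u ^ q ^ b)⁻¹ ↔ (q : ZMod (orderOf u)) ^ a = -(q : ZMod (orderOf u)) ^ b := by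
  rw [eq_inv_iff_mul_eq_one, ← pow_add, ← orderOf_dvd_iff_pow_eq_one, ← ZMod.natCast_eq_zero_iff,
    Nat.cast_add, Nat.cast_pow, Nat.cast_pow, eq_neg_iff_add_eq_zero]

open Pointwise in
lemma signedOrder_le_ncard (hS : S.Finite) (hpow : ∀ u ∈ S, u ^ q ∈ S) (hinv : ∀ u ∈ S, u⁻¹ ∈ S)
    {u : G} (hu : u ∈ S) (hq : (orderOf u).Coprime q) :
    signedOrder q (orderOf u) ≤ {v ∈ S | orderOf v = orderOf u}.ncard := by
  set e := orderOf (q : ZMod (orderOf u))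
  let orbit : Set G := (fun k ↦ u ^ q ^ k) '' Set.Iio e
  have horbit : orbit ⊆ {v ∈ S | orderOf v = orderOf u} := by
    rintro _ ⟨k, -, rfl⟩
    exact ⟨pow_pow_mem hpow hu k, (hq.pow_right k).orderOf_pow⟩
  have horbit_inv : orbit⁻¹ ⊆ {v ∈ S | orderOf v = orderOf u} := fun v hv ↦
    ⟨inv_inv v ▸ hinv _ (horbit hv).1, orderOf_inv v ▸ (horbit hv).2⟩
  have hcard : orbit.ncard = e := by
    rw [Set.InjOn.ncard_image, ← Finset.coe_Iio, Set.ncard_coe_finset, Nat.card_Iio]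
    exact fun a ha b hb hab ↦ pow_injOn_Iio_orderOf ha hb ((pow_pow_eq_pow_pow_iff u a b).1 hab)
  have hfin := hS.sep (fun v ↦ orderOf v = orderOf u)
  unfold signedOrder
  split_ifs with hneg
  · exact hcard.symm.trans_le (Set.ncard_le_ncard horbit hfin)
  have hdisj : Disjoint orbit orbit⁻¹ := by
    refine Set.disjoint_left.2 ?_
    rintro _ ⟨a, -, rfl⟩ ⟨b, hb, hab⟩
    have h := (pow_pow_eq_inv_pow_pow_iff u a b).1 (inv_eq_iff_eq_inv.1 hab.symm)
    refine hneg ⟨a + (e - b), ?_⟩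
    rw [pow_add, h, neg_mul, ← pow_add, Nat.add_sub_cancel' (Set.mem_Iio.1 hb).le,
      pow_orderOf_eq_one]
  calc
    2 * e = (orbit ∪ orbit⁻¹).ncard := by
      rw [Set.ncard_union_eq hdisj (hfin.subset horbit) (hfin.subset horbit_inv), Set.ncard_inv,
        hcard, two_mul]
    _ ≤ _ := Set.ncard_le_ncard (Set.union_subset horbit horbit_inv) hfin

lemma orderOf_eq_or_eq_mul {r s : ℕ} (hr : r.Prime) (hs : s.Prime) {u : G} (h : u ^ (r * s) = 1)
    (hus : u ^ s ≠ 1) : orderOf u = r ∨ orderOf u = r * s := by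
  obtain ⟨a, b, ha, hb, hab⟩ := (Nat.dvd_mul).1 (orderOf_dvd_of_pow_eq_one h)
  rcases (Nat.dvd_prime hr).1 ha with rfl | rfl
  · exact absurd (orderOf_dvd_iff_pow_eq_one.1 (by simpa [← hab] using hb)) hus
  · rcases (Nat.dvd_prime hs).1 hb with rfl | rfl <;> simp [← hab]

lemma signedOrder_mul_le_ncard_or_add_le_ncard {r s : ℕ} (hr : r.Prime) (hs : s.Prime) (hrs : r ≠ s)
    (hrq : r.Coprime q) (hsq : s.Coprime q) (hS : S.Finite) (hpow : ∀ u ∈ S, u ^ q ∈ S)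
    (hinv : ∀ u ∈ S, u⁻¹ ∈ S) (hexp : ∀ u ∈ S, u ^ (r * s) = 1) (hSs : ∃ u ∈ S, u ^ s ≠ 1)
    (hSr : ∃ w ∈ S, w ^ r ≠ 1) :
    signedOrder q (r * s) ≤ S.ncard ∨ signedOrder q r + signedOrder q s ≤ S.ncard := by
  obtain ⟨u, hu, hus⟩ := hSs
  obtain ⟨w, hw, hwr⟩ := hSr
  have hle {v : G} (hv : v ∈ S) {n : ℕ} (hvn : orderOf v = n) (hn : n.Coprime q) :
      signedOrder q n ≤ {v ∈ S | orderOf v = n}.ncard := by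
    subst hvn
    exact signedOrder_le_ncard hS hpow hinv hv hn
  have hle_mul {v : G} (hv : v ∈ S) (hvn : orderOf v = r * s) : signedOrder q (r * s) ≤ S.ncard :=
    (hle hv hvn (hrq.mul_left hsq)).trans (Set.ncard_le_ncard (Set.sep_subset _ _) hS)
  rcases orderOf_eq_or_eq_mul hr hs (hexp u hu) hus with hur | hurs
  swap
  · exact .inl (hle_mul hu hurs)
  rcases orderOf_eq_or_eq_mul hs hr (mul_comm r s ▸ hexp w hw) hwr with hws | hwrs
  swap
  · exact .inl (hle_mul hw (hwrs.trans (mul_comm s r)))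
  right
  have hdisj : Disjoint {v ∈ S | orderOf v = r} {v ∈ S | orderOf v = s} :=
    Set.disjoint_left.2 fun v hvr hvs ↦ hrs (hvr.2.symm.trans hvs.2)
  calc
    _ ≤ {v ∈ S | orderOf v = r}.ncard + {v ∈ S | orderOf v = s}.ncard :=
      add_le_add (hle hu hur hrq) (hle hw hws hsq)
    _ = ({v ∈ S | orderOf v = r} ∪ {v ∈ S | orderOf v = s}).ncard :=
      (Set.ncard_union_eq hdisj (hS.sep _) (hS.sep _)).symm
    _ ≤ S.ncard :=
      Set.ncard_le_ncard (Set.union_subset (Set.sep_subset _ _) (Set.sep_subset _ _)) hS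

end SignedOrder

section UnitEigenvalues

-- If `1` were the only eigenvalue, then `1 + a + ⋯ + a ^ (n - 1)` would have the only eigenvalue
-- `n ≠ 0`, hence be invertible; but it annihilates `a - 1`.
lemma exists_mem_spectrum_ne_one {K A : Type*} [Field K] [IsAlgClosed K] [Ring A] [Algebra K A]
    [FiniteDimensional K A] {a : A} {n : ℕ} (hn : (n : K) ≠ 0) (ha : a ^ n = 1) (ha1 : a ≠ 1) :
    ∃ μ ∈ spectrum K a, μ ≠ 1 := by
  by_contra! hspec
  have : Nontrivial A := ⟨a, 1, ha1⟩
  let p : K[X] := ∑ k ∈ Finset.range n, X ^ k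
  have hunit : IsUnit (aeval a p) := by
    rw [← spectrum.zero_notMem_iff K, spectrum.map_polynomial_aeval_of_nonempty a p
      (spectrum.nonempty_of_isAlgClosed_of_finiteDimensional K a)]
    rintro ⟨μ, hμ, hpμ⟩
    exact hn (by simpa [p, hspec μ hμ, eval_finsetSum] using hpμ)
  have hzero : aeval a p * (a - 1) = 0 := by simp [p, geom_sum_mul, ha]
  exact ha1 (sub_eq_zero.1 (hunit.mul_right_eq_zero.1 hzero))

lemma exists_mem_spectrum_pow_ne_one {K A : Type*} [Field K] [IsAlgClosed K] [Ring A] [Algebra K A]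
    [FiniteDimensional K A] {a : A} {m n : ℕ} (hm : m ≠ 0) (hn : (n : K) ≠ 0) (ha : a ^ n = 1)
    (ham : a ^ m ≠ 1) : ∃ μ ∈ spectrum K a, μ ^ m ≠ 1 := by
  obtain ⟨_, hμ, hμ1⟩ := exists_mem_spectrum_ne_one hn (by rw [pow_right_comm, ha, one_pow]) ham
  rw [spectrum.map_pow_of_pos a (Nat.pos_of_ne_zero hm)] at hμ
  obtain ⟨μ, hμ, rfl⟩ := hμ
  exact ⟨μ, hμ, hμ1⟩

/-- The nonzero eigenvalues of a matrix over `F` in an extension field `K`, as a subset of the group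
`Kˣ`. -/
def unitEigenvalues {n F : Type*} (K : Type*) [Fintype n] [DecidableEq n] [Field F] [Field K]
    [Algebra F K] (A : Matrix n n F) : Set Kˣ :=
  Units.val ⁻¹' spectrum K (A.map (algebraMap F K))

variable {n F K : Type*} [Fintype n] [DecidableEq n] [Field F] [Field K] [Algebra F K]
  {A : Matrix n n F}

lemma mem_unitEigenvalues_iff {u : Kˣ} :
    u ∈ unitEigenvalues K A ↔ (u : K) ∈ A.charpoly.rootSet K := by
  rw [unitEigenvalues, Set.mem_preimage, mem_spectrum_iff_isRoot_charpoly, charpoly_map,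
    mem_rootSet_of_ne A.charpoly_monic.ne_zero, IsRoot, eval_map_algebraMap]

variable (K A) in
lemma finite_unitEigenvalues : (unitEigenvalues K A).Finite :=
  (Matrix.finite_spectrum _).preimage Units.val_injective.injOn

variable (K A) in
lemma ncard_unitEigenvalues_le : (unitEigenvalues K A).ncard ≤ Fintype.card n :=
  calc
    _ ≤ (A.charpoly.rootSet K).ncard :=
      Set.ncard_le_ncard_of_injOn Units.val (fun _ ↦ mem_unitEigenvalues_iff.1)
        Units.val_injective.injOn (rootSet_finite _ _)
    _ ≤ A.charpoly.natDegree := ncard_rootSet_le _ _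
    _ = Fintype.card n := A.charpoly_natDegree_eq_dim

lemma pow_card_mem_unitEigenvalues [Fintype F] {u : Kˣ} (hu : u ∈ unitEigenvalues K A) :
    u ^ Fintype.card F ∈ unitEigenvalues K A := by
  rw [mem_unitEigenvalues_iff] at hu ⊢
  simpa using rootSet_mapsTo (FiniteField.frobeniusAlgHom F K) hu

lemma pow_eq_one_of_mem_unitEigenvalues {u : Kˣ} (hu : u ∈ unitEigenvalues K A) {k : ℕ}
    (hA : A ^ k = 1) : u ^ k = 1 := by
  have : Nonempty n := by
    by_contra h
    rw [not_nonempty_iff] at h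
    simp [unitEigenvalues, spectrum.of_subsingleton] at hu
  have h := spectrum.pow_mem_pow _ k (Set.mem_preimage.1 hu)
  rw [← Matrix.map_pow, hA, Matrix.map_one _ (map_zero _) (map_one _), spectrum.one_eq] at h
  exact Units.ext (by simpa using h)

lemma exists_mem_unitEigenvalues_pow_ne_one [IsAlgClosed K] {k m : ℕ} (hm : m ≠ 0)
    (hk : (k : F) ≠ 0) (hA : A ^ k = 1) (hAm : A ^ m ≠ 1) :
    ∃ u ∈ unitEigenvalues K A, u ^ m ≠ 1 := by
  have hmap (l : ℕ) : A.map (algebraMap F K) ^ l = 1 ↔ A ^ l = 1 := by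
    rw [← Matrix.map_pow, ← Matrix.map_one _ (map_zero (algebraMap F K)) (map_one _),
      (map_injective (algebraMap F K).injective).eq_iff]
  have hkK : (k : K) ≠ 0 := by
    rw [← map_natCast (algebraMap F K)]
    exact (map_ne_zero (algebraMap F K)).2 hk
  obtain ⟨μ, hμ, hμm⟩ :=
    exists_mem_spectrum_pow_ne_one hm hkK ((hmap k).2 hA) (mt (hmap m).1 hAm)
  have hunit : IsUnit (A.map (algebraMap F K)) :=
    .of_pow_eq_one ((hmap k).2 hA) (by rintro rfl; simp at hk)
  have hμ0 : μ ≠ 0 := by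
    rintro rfl
    exact spectrum.zero_notMem_iff K |>.2 hunit hμ
  exact ⟨Units.mk0 μ hμ0, hμ, fun h ↦ hμm (by simpa using congrArg Units.val h)⟩

lemma inv_mem_unitEigenvalues_of_mul_eq_one {B : Matrix n n F} (hAB : A * B = 1) {u : Kˣ}
    (hu : u ∈ unitEigenvalues K A) : u⁻¹ ∈ unitEigenvalues K B := by
  have hmap {M N : Matrix n n F} (h : M * N = 1) :
      M.map (algebraMap F K) * N.map (algebraMap F K) = 1 := by
    rw [← Matrix.map_mul, h, Matrix.map_one _ (map_zero _) (map_one _)]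
  exact spectrum.inv_mem_iff (a := ⟨_, _, hmap hAB, hmap (mul_eq_one_comm.1 hAB)⟩).1 hu

end UnitEigenvalues

section SymplecticGroup

variable {m R : Type*} [Fintype m] [DecidableEq m] [CommRing R]

-- `g⁻¹ = -J gᵀ J` is conjugate to `gᵀ`, because `J⁻¹ = -J`.
lemma charpoly_coe_inv_symplecticGroup (g : symplecticGroup m R) :
    (g⁻¹ : symplecticGroup m R).1.charpoly = g.1.charpoly := by
  rw [SymplecticGroup.coe_inv, Matrix.mul_assoc, charpoly_mul_comm, Matrix.mul_assoc,
    mul_neg, J_squared, neg_neg, mul_one, charpoly_transpose]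

lemma inv_mem_unitEigenvalues {F K : Type*} [Field F] [Field K] [Algebra F K]
    {g : symplecticGroup m F} {u : Kˣ} (hu : u ∈ unitEigenvalues K g.1) :
    u⁻¹ ∈ unitEigenvalues K g.1 := by
  rw [mem_unitEigenvalues_iff, ← charpoly_coe_inv_symplecticGroup, ← mem_unitEigenvalues_iff]
  exact inv_mem_unitEigenvalues_of_mul_eq_one (congrArg Subtype.val (mul_inv_cancel g)) hu

lemma natCast_ne_zero_of_coprime_card {F : Type*} [Field F] [Fintype F] {n : ℕ}
    (h : n.Coprime (Fintype.card F)) : (n : F) ≠ 0 := by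
  have hF : IsCoprime (n : F) (Fintype.card F : F) := h.cast
  rw [Nat.cast_card_eq_zero, isCoprime_zero_right] at hF
  exact hF.ne_zero

lemma signedOrder_mul_le_or_add_le_of_orderOf_eq_mul {F : Type*} [Field F] [Fintype F]
    {r s : ℕ} (hr : r.Prime) (hs : s.Prime) (hrs : r ≠ s) (hrq : r.Coprime (Fintype.card F))
    (hsq : s.Coprime (Fintype.card F)) {g : symplecticGroup m F} (hg : orderOf g = r * s) :
    signedOrder (Fintype.card F) (r * s) ≤ Fintype.card (m ⊕ m) ∨
      signedOrder (Fintype.card F) r + signedOrder (Fintype.card F) s ≤ Fintype.card (m ⊕ m) := by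
  have hpow (k : ℕ) : g.1 ^ k = 1 ↔ r * s ∣ k := by
    rw [← hg, orderOf_dvd_iff_pow_eq_one, Subtype.ext_iff]
    rfl
  have hrsF : ((r * s : ℕ) : F) ≠ 0 := natCast_ne_zero_of_coprime_card (hrq.mul_left hsq)
  have hroot {l : ℕ} (hl : l ≠ 0) (hdvd : ¬ r * s ∣ l) :
      ∃ u ∈ unitEigenvalues (AlgebraicClosure F) g.1, u ^ l ≠ 1 :=
    exists_mem_unitEigenvalues_pow_ne_one hl hrsF ((hpow _).2 dvd_rfl) (mt (hpow l).1 hdvd)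
  have hs_not : ¬ r * s ∣ s := Nat.not_dvd_of_pos_of_lt hs.pos (lt_mul_left hs.pos hr.one_lt)
  have hr_not : ¬ r * s ∣ r := Nat.not_dvd_of_pos_of_lt hr.pos (lt_mul_right hr.pos hs.one_lt)
  have hncard := ncard_unitEigenvalues_le (AlgebraicClosure F) g.1
  refine (signedOrder_mul_le_ncard_or_add_le_ncard hr hs hrs hrq hsq (finite_unitEigenvalues _ _)
    (fun _ ↦ pow_card_mem_unitEigenvalues) (fun _ ↦ inv_mem_unitEigenvalues)
    (fun _ hu ↦ pow_eq_one_of_mem_unitEigenvalues hu ((hpow _).2 dvd_rfl))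
    (hroot hs.ne_zero hs_not) (hroot hr.ne_zero hr_not)).imp hncard.trans' hncard.trans'

lemma isSymm_of_commute_single_self {α : Type*} [NonAssocSemiring α] {A : Matrix m m α}
    (hA : ∀ b, Commute (single b b 1) A) : A.IsSymm := by
  have hdiag {a b : m} (hab : a ≠ b) : A a b = 0 := by
    simpa [hab, hab.symm] using (congrFun₂ (hA b).eq a b).symm
  ext a b
  rcases eq_or_ne a b with rfl | hab
  · rfl
  · rw [transpose_apply, hdiag hab, hdiag hab.symm]

-- An element commuting with `J` and with the shears `fromBlocks 1 S 0 1`, `S` symmetric, has the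
-- form `fromBlocks A 0 0 A`, where `A` commutes with every such `S`.
lemma isSymm_of_mem_center_symplecticGroup {z : symplecticGroup m R}
    (hz : z ∈ Subgroup.center (symplecticGroup m R)) : z.1.IsSymm := by
  have hcomm {N : Matrix (m ⊕ m) (m ⊕ m) R} (hN : N ∈ symplecticGroup m R) : N * z.1 = z.1 * N :=
    congrArg Subtype.val (Subgroup.mem_center_iff.1 hz ⟨N, hN⟩)
  have hJ := hcomm (SymplecticGroup.J_mem m R)
  have hshear {S : Matrix m m R} (hS : S.IsSymm) :=
    hcomm (SymplecticGroup.fromBlocks_mem_iff.2 (by simp [hS.eq]) : fromBlocks 1 S 0 1 ∈ _)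
  obtain ⟨A, B, C, D, hM⟩ : ∃ A B C D, z.1 = fromBlocks A B C D :=
    ⟨_, _, _, _, (fromBlocks_toBlocks z.1).symm⟩
  simp only [hM, J, fromBlocks_multiply, fromBlocks_inj, Matrix.zero_mul, Matrix.one_mul,
    Matrix.mul_zero, Matrix.mul_one, Matrix.neg_mul, Matrix.mul_neg, zero_add, add_zero]
    at hJ hshear
  obtain ⟨hCB, -, hAD, -⟩ := hJ
  have hC : C = 0 := by simpa using (hshear isSymm_one).1
  have hB : B = 0 := by rw [← hCB, hC, neg_zero]
  have hA : A.IsSymm := isSymm_of_commute_single_self fun b ↦ by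
    have h := (hshear (S := single b b 1) (transpose_single ..)).2.1
    rwa [hB, zero_add, add_zero, ← hAD] at h
  rw [hM, ← hAD, hB, hC]
  exact hA.fromBlocks (transpose_zero) hA

lemma sq_eq_one_of_mem_center_symplecticGroup {z : symplecticGroup m R}
    (hz : z ∈ Subgroup.center (symplecticGroup m R)) : z ^ 2 = 1 := by
  have hJ : J m R * z.1 = z.1 * J m R :=
    congrArg Subtype.val (Subgroup.mem_center_iff.1 hz (SymplecticGroup.symJ m R))
  have hinv : z⁻¹ = z := Subtype.ext <| by
    rw [SymplecticGroup.coe_inv, (isSymm_of_mem_center_symplecticGroup hz).eq, Matrix.mul_assoc,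
      ← hJ, ← Matrix.mul_assoc, neg_mul, J_squared, neg_neg, one_mul]
  rw [pow_two, ← inv_eq_iff_mul_eq_one, hinv]

end SymplecticGroup

section Arithmetic

lemma two_mul_orderOf_le_or_of_signedOrder_le {q n N : ℕ} (h : signedOrder q n ≤ N) :
    2 * orderOf (q : ZMod n) ≤ N ∨
      orderOf (q : ZMod n) ≤ N ∧ ∃ k, (q : ZMod n) ^ k = -1 := by
  unfold signedOrder at h
  split_ifs at h with hneg
  · exact .inr ⟨h, hneg⟩
  · exact .inl h

lemma orderOf_dvd_two_mul_and_not_dvd {R : Type*} [Monoid R] [HasDistribNeg R]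
    (hR : (-1 : R) ≠ 1) {a : R} {k : ℕ} (h : a ^ k = -1) : orderOf a ∣ 2 * k ∧ ¬ orderOf a ∣ k := by
  rw [orderOf_dvd_iff_pow_eq_one, orderOf_dvd_iff_pow_eq_one, mul_comm, pow_mul, h]
  exact ⟨neg_one_sq, hR⟩

lemma two_mul_orderOf_le_signedOrder_or_even {q n : ℕ} [Fact (2 < n)] :
    2 * orderOf (q : ZMod n) ≤ signedOrder q n ∨
      Even (orderOf (q : ZMod n)) ∧ orderOf (q : ZMod n) ≤ signedOrder q n := by
  rcases two_mul_orderOf_le_or_of_signedOrder_le (le_refl (signedOrder q n)) with h | ⟨h, k, hk⟩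
  · exact .inl h
  · obtain ⟨hdvd, hnot⟩ := orderOf_dvd_two_mul_and_not_dvd ZMod.neg_one_ne_one hk
    refine .inr ⟨?_, h⟩
    by_contra hodd
    exact hnot ((Nat.coprime_two_right.2 (Nat.not_even_iff_odd.1 hodd)).dvd_of_dvd_mul_left hdvd)

lemma orderOf_natCast_zmod_pos {q n : ℕ} [NeZero n] (h : q.Coprime n) :
    0 < orderOf (q : ZMod n) := by
  rw [← ZMod.coe_unitOfCoprime q h, orderOf_units]
  exact orderOf_pos _

lemma orderOf_natCast_zmod_dvd {q m n : ℕ} (h : m ∣ n) :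
    orderOf (q : ZMod m) ∣ orderOf (q : ZMod n) := by
  simpa only [MonoidHom.coe_coe, map_natCast] using
    orderOf_map_dvd (ZMod.castHom h (ZMod m) : ZMod n →* ZMod m) (q : ZMod n)

/-- The pairs `(i, j)` of orders of `q` modulo `r` and modulo `s` permitted by commuting elements
of orders `r` and `s`. -/
def AdmissibleOrders (i j : ℕ) : Prop :=
  (i = 8 → j = 8) ∧
  (i = 4 → j ∣ 4) ∧
  (i = 6 → j ∣ 2 ∨ j = 6) ∧
  (i = 3 → j ∣ 2 ∨ j ∣ 3) ∧
  (i = 1 ∨ i = 2 → j ∣ 4 ∨ j ∣ 6)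

lemma admissibleOrders_self (i : ℕ) : AdmissibleOrders i i := by
  unfold AdmissibleOrders
  by_cases hi : i ≤ 8
  · interval_cases i <;> omega
  · omega

lemma admissibleOrders_of_dvd {e i j : ℕ} (he : 0 < e) (hi : i ∣ e) (hj : j ∣ e)
    (h : e ≤ 4 ∨ e ≤ 8 ∧ ∃ k, (i ∣ 2 * k ∧ ¬ i ∣ k) ∧ (j ∣ 2 * k ∧ ¬ j ∣ k)) :
    AdmissibleOrders i j := by
  have hi0 := Nat.pos_of_dvd_of_pos hi he
  have hj0 := Nat.pos_of_dvd_of_pos hj he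
  have he8 : e ≤ 8 := by omega
  have hi8 := (Nat.le_of_dvd he hi).trans he8
  have hj8 := (Nat.le_of_dvd he hj).trans he8
  unfold AdmissibleOrders
  interval_cases i <;> interval_cases j <;> omega

lemma admissibleOrders_of_signedOrder_mul_le {q r s : ℕ} (hr : 2 < r) (hs : 2 < s)
    (hrq : r.Coprime q) (hsq : s.Coprime q) (h : signedOrder q (r * s) ≤ 8) :
    AdmissibleOrders (orderOf (q : ZMod r)) (orderOf (q : ZMod s)) := by
  have : Fact (2 < r) := ⟨hr⟩
  have : Fact (2 < s) := ⟨hs⟩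
  have : NeZero (r * s) := ⟨by positivity⟩
  have hr_dvd := dvd_mul_right r s
  have hs_dvd := dvd_mul_left s r
  refine admissibleOrders_of_dvd (orderOf_natCast_zmod_pos (hrq.mul_left hsq).symm)
    (orderOf_natCast_zmod_dvd hr_dvd) (orderOf_natCast_zmod_dvd hs_dvd) ?_
  rcases two_mul_orderOf_le_or_of_signedOrder_le h with he | ⟨he, k, hk⟩
  · exact .inl (by omega)
  have hneg {n : ℕ} (hn : n ∣ r * s) : (q : ZMod n) ^ k = -1 := by
    simpa only [map_pow, map_natCast, map_neg, map_one] using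
      congrArg (ZMod.castHom hn (ZMod n)) hk
  exact .inr ⟨he, k, orderOf_dvd_two_mul_and_not_dvd ZMod.neg_one_ne_one (hneg hr_dvd),
    orderOf_dvd_two_mul_and_not_dvd ZMod.neg_one_ne_one (hneg hs_dvd)⟩

lemma admissibleOrders_of_signedOrder_add_le {q r s : ℕ} (hr : 2 < r) (hs : 2 < s)
    (hrq : r.Coprime q) (hsq : s.Coprime q) (h : signedOrder q r + signedOrder q s ≤ 8) :
    AdmissibleOrders (orderOf (q : ZMod r)) (orderOf (q : ZMod s)) := by
  have : Fact (2 < r) := ⟨hr⟩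
  have : Fact (2 < s) := ⟨hs⟩
  have : NeZero r := ⟨by omega⟩
  have : NeZero s := ⟨by omega⟩
  have hi := orderOf_natCast_zmod_pos hrq.symm
  have hj := orderOf_natCast_zmod_pos hsq.symm
  have hir := two_mul_orderOf_le_signedOrder_or_even (q := q) (n := r)
  have hjs := two_mul_orderOf_le_signedOrder_or_even (q := q) (n := s)
  generalize orderOf (q : ZMod r) = i at *
  generalize orderOf (q : ZMod s) = j at *
  have hi8 : i ≤ 8 := by omega
  have hj8 : j ≤ 8 := by omega
  simp only [Nat.even_iff] at hir hjs
  unfold AdmissibleOrders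
  interval_cases i <;> interval_cases j <;> omega

lemma pow_eq_neg_one_of_orderOf_eq_two_mul {R : Type*} [CommRing R] [IsDomain R] {a : R} {k : ℕ}
    (hk : k ≠ 0) (ha : orderOf a = 2 * k) : a ^ k = -1 :=
  ((IsPrimitiveRoot.orderOf a).pow (by omega) (by omega)).eq_neg_one_of_two_right

lemma sub_one_mul_pow_three_add_one_eq_zero {R : Type*} [CommRing R] [IsDomain R] {a : R}
    (h : orderOf a ∣ 2 ∨ orderOf a = 6) : (a - 1) * (a ^ 3 + 1) = 0 := by
  rcases h with h | h
  · linear_combination (a ^ 2 - a + 1) * orderOf_dvd_iff_pow_eq_one.1 h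
  · linear_combination (a - 1) * pow_eq_neg_one_of_orderOf_eq_two_mul three_ne_zero h

lemma add_one_mul_pow_three_sub_one_eq_zero {R : Type*} [CommRing R] {a : R}
    (h : orderOf a ∣ 2 ∨ orderOf a ∣ 3) : (a + 1) * (a ^ 3 - 1) = 0 := by
  rcases h with h | h
  · linear_combination (a ^ 2 + a + 1) * orderOf_dvd_iff_pow_eq_one.1 h
  · linear_combination (a + 1) * orderOf_dvd_iff_pow_eq_one.1 h

lemma sq_add_one_mul_pow_six_sub_one_eq_zero {R : Type*} [CommRing R] {a : R}
    (h : orderOf a ∣ 4 ∨ orderOf a ∣ 6) :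
    (a ^ 2 + 1) * (a ^ 6 - 1) = 0 := by
  rcases h with h | h
  · linear_combination (a ^ 4 + a ^ 2 + 1) * orderOf_dvd_iff_pow_eq_one.1 h
  · linear_combination (a ^ 2 + 1) * orderOf_dvd_iff_pow_eq_one.1 h

lemma dvd_of_admissibleOrders_orderOf {q s i : ℕ} (hs : s.Prime) (hq : 0 < q)
    (h : AdmissibleOrders i (orderOf (q : ZMod s))) :
    (i = 8 → s ∣ q ^ 4 + 1) ∧
    (i = 4 → s ∣ q ^ 4 - 1) ∧
    (i = 6 → s ∣ (q - 1) * (q ^ 3 + 1)) ∧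
    (i = 3 → s ∣ (q + 1) * (q ^ 3 - 1)) ∧
    (i = 1 ∨ i = 2 → s ∣ (q ^ 2 + 1) * (q ^ 6 - 1)) := by
  have : Fact s.Prime := ⟨hs⟩
  obtain ⟨h8, h4, h6, h3, h12⟩ := h
  simp only [← ZMod.natCast_eq_zero_iff, Nat.cast_mul, Nat.cast_add, Nat.cast_pred hq,
    Nat.cast_pred (pow_pos hq _), Nat.cast_pow, Nat.cast_one]
  refine ⟨fun hi ↦ ?_, fun hi ↦ ?_, fun hi ↦ sub_one_mul_pow_three_add_one_eq_zero (h6 hi),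
    fun hi ↦ add_one_mul_pow_three_sub_one_eq_zero (h3 hi),
    fun hi ↦ sq_add_one_mul_pow_six_sub_one_eq_zero (h12 hi)⟩
  · rw [pow_eq_neg_one_of_orderOf_eq_two_mul four_ne_zero (h8 hi), neg_add_cancel]
  · rw [orderOf_dvd_iff_pow_eq_one.1 (h4 hi), sub_self]

lemma orderOf_eq_of_isLeast_dvd_pow_sub_one {q r i : ℕ} (hq : 0 < q)
    (hi : IsLeast {a | 0 < a ∧ r ∣ q ^ a - 1} i) : orderOf (q : ZMod r) = i := by
  have hdvd (a : ℕ) : r ∣ q ^ a - 1 ↔ (q : ZMod r) ^ a = 1 := by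
    rw [← ZMod.natCast_eq_zero_iff, Nat.cast_pred (pow_pos hq a), sub_eq_zero, Nat.cast_pow]
  simp only [hdvd] at hi
  rw [orderOf_eq_iff hi.1.1]
  exact ⟨hi.1.2, fun m hmi hm hpow ↦ hmi.not_ge (hi.2 ⟨hm, hpow⟩)⟩

end Arithmetic

lemma exists_mk_eq_orderOf_eq {G : Type*} [Group G] {N : Subgroup G} [N.Normal]
    (hN : ∀ z ∈ N, z ^ 2 = 1) {x : G ⧸ N} (hx : Odd (orderOf x)) :
    ∃ g : G, (g : G ⧸ N) = x ∧ orderOf g = orderOf x := by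
  obtain ⟨g, rfl⟩ := QuotientGroup.mk_surjective x
  set n := orderOf (g : G ⧸ N)
  have hgn : g ^ n ∈ N := by
    rw [← QuotientGroup.eq_one_iff, QuotientGroup.mk_pow, pow_orderOf_eq_one]
  obtain ⟨k, hk⟩ := hx.add_one.two_dvd
  have hlift : ((g ^ (n + 1) : G) : G ⧸ N) = g := by
    rw [QuotientGroup.mk_pow, pow_succ, pow_orderOf_eq_one, one_mul]
  refine ⟨g ^ (n + 1), hlift, Nat.dvd_antisymm (orderOf_dvd_of_pow_eq_one ?_) ?_⟩
  · rw [pow_right_comm, hk, pow_mul, hN _ hgn, one_pow]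
  · simpa only [QuotientGroup.mk'_apply, hlift] using
      orderOf_map_dvd (QuotientGroup.mk' N) (g ^ (n + 1))

lemma exists_orderOf_eq_mul_of_dvd_card_centralizer {G : Type*} [Group G] [Finite G] {x : G}
    {s : ℕ} (hs : s.Prime) (hxs : (orderOf x).Coprime s)
    (hdvd : s ∣ Nat.card (Subgroup.centralizer {x})) : ∃ z : G, orderOf z = orderOf x * s := by
  have : Fact s.Prime := ⟨hs⟩
  obtain ⟨⟨y, hyx⟩, hy⟩ := exists_prime_orderOf_dvd_card' s hdvd
  rw [Subgroup.orderOf_mk] at hy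
  have hcomm : Commute x y := (Subgroup.mem_centralizer_singleton_iff.1 hyx).symm
  exact ⟨x * y, by rw [hcomm.orderOf_mul_eq_mul_orderOf_of_coprime (hy ▸ hxs), hy]⟩

lemma admissibleOrders_of_dvd_card_centralizer {F : Type*} [Field F] [Fintype F] {r s : ℕ}
    (hr : r.Prime) (hrodd : Odd r) (hrq : r.Coprime (Fintype.card F))
    (hs : s.Prime) (hsodd : Odd s) (hsq : s.Coprime (Fintype.card F))
    {x : symplecticGroup (Fin 4) F ⧸ Subgroup.center (symplecticGroup (Fin 4) F)}
    (hx : orderOf x = r) (hsdvd : s ∣ Nat.card (Subgroup.centralizer {x})) :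
    AdmissibleOrders (orderOf (Fintype.card F : ZMod r)) (orderOf (Fintype.card F : ZMod s)) := by
  rcases eq_or_ne r s with rfl | hrs
  · exact admissibleOrders_self _
  obtain ⟨z, hz⟩ := exists_orderOf_eq_mul_of_dvd_card_centralizer hs
    (hx ▸ (Nat.coprime_primes hr hs).2 hrs) hsdvd
  rw [hx] at hz
  obtain ⟨g, -, hg⟩ := exists_mk_eq_orderOf_eq
    (fun _ ↦ sq_eq_one_of_mem_center_symplecticGroup) (hz ▸ hrodd.mul hsodd)
  have hr2 : 2 < r := hr.two_le.lt_of_ne' (hrodd.ne_two_of_dvd_nat dvd_rfl)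
  have hs2 : 2 < s := hs.two_le.lt_of_ne' (hsodd.ne_two_of_dvd_nat dvd_rfl)
  rcases signedOrder_mul_le_or_add_le_of_orderOf_eq_mul hr hs hrs hrq hsq (hg.trans hz) with h | h
  · exact admissibleOrders_of_signedOrder_mul_le hr2 hs2 hrq hsq h
  · exact admissibleOrders_of_signedOrder_add_le hr2 hs2 hrq hsq h

/-- Lemma 2.6, `PSp₈(q)` case: bounds on primes `s ≠ p` dividing the order of the
centralizer of an element of odd prime order `r ≠ p` in `PSp₈(q)`, in terms of
`i = Φ(r,q)`, the least `a ≥ 1` with `r ∣ qᵃ - 1`. -/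
theorem PSp8_centralizer_prime_divisor {p f q : ℕ} (hp : p.Prime) (hf : 0 < f)
    (hq : q = p ^ f) (F : Type*) [Field F] [Fintype F] (hF : Fintype.card F = q)
    {r : ℕ} (hr : r.Prime) (hrodd : Odd r) (hrp : r ≠ p)
    (x : Matrix.symplecticGroup (Fin 4) F ⧸
      Subgroup.center (Matrix.symplecticGroup (Fin 4) F))
    (hx : orderOf x = r)
    {i : ℕ} (hi : IsLeast {a : ℕ | 0 < a ∧ r ∣ q ^ a - 1} i)
    {s : ℕ} (hs : s.Prime) (hsp : s ≠ p)
    (hsdvd : s ∣ Nat.card (Subgroup.centralizer ({x} : Set _))) :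
    (i = 8 → s ∣ q ^ 4 + 1) ∧
    (i = 4 → s ∣ q ^ 4 - 1) ∧
    (i = 6 → s ∣ (q - 1) * (q ^ 3 + 1)) ∧
    (i = 3 → s ∣ (q + 1) * (q ^ 3 - 1)) ∧
    (i = 1 ∨ i = 2 → s ∣ (q ^ 2 + 1) * (q ^ 6 - 1)) := by
  have hq0 : 0 < q := hq ▸ pow_pos hp.pos f
  have hcop {t : ℕ} (ht : t.Prime) (htp : t ≠ p) : t.Coprime q :=
    hq ▸ ((Nat.coprime_primes ht hp).2 htp).pow_right f
  rcases hs.eq_two_or_odd' with rfl | hsodd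
  · have hqodd : Odd q := Nat.coprime_two_left.1 (hcop hs hsp)
    have hsub (a : ℕ) : 2 ∣ q ^ a - 1 := (Nat.Odd.sub_odd hqodd.pow odd_one).two_dvd
    have hadd (a : ℕ) : 2 ∣ q ^ a + 1 := hqodd.pow.add_one.two_dvd
    exact ⟨fun _ ↦ hadd 4, fun _ ↦ hsub 4, fun _ ↦ (hadd 3).mul_left _,
      fun _ ↦ (hsub 3).mul_left _, fun _ ↦ (hsub 6).mul_left _⟩
  · rw [← orderOf_eq_of_isLeast_dvd_pow_sub_one hq0 hi]
    subst hF
    exact dvd_of_admissibleOrders_orderOf hs hq0 (admissibleOrders_of_dvd_card_centralizer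
      hr hrodd (hcop hr hrp) hs hsodd (hcop hs hsp) hx hsdvd)
end

section
/- Γ(Sp_6(2)) = Γ(S_8), where Sp_6(2) = Matrix.symplecticGroup (Fin 3) (ZMod 2) and S_8 = Equiv.Perm (Fin 8). Explicitly: a prime divides |Sp_6(2)| iff it divides 8!, and for all distinct primes r, s, Sp_6(2) has an element of order r·s iff S_8 has an element of order r·s. -/
/-!
`S₈` acts faithfully on the even-weight vectors of `𝔽₂⁸` modulo the all-ones vector, a symplectic
space of dimension `6`, so the edges of `Γ(S₈)` are edges of `Γ(Sp₆(2))`.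

Conversely, let `T` have prime order `p` on a symplectic space of dimension `2n` over `𝔽_q`, and
suppose that the order `d` of `q` modulo `p` is odd and not `1`. A cyclotomic factor `f` of degree
`d` with `ker f(T) ≠ 0` is coprime to its reciprocal `f*`, and `ker f(T)` and `ker f*(T)` have equal
dimension, so `d ≤ n`. If `d = n`, the space is the sum of these two kernels, both simple, and an
element of prime order `r` commuting with `T` can be nontrivial only if `r ∣ qⁿ - 1`. For `q = 2`
and `n = 3` this rules out `p = 31`, for which `d = 5`, and isolates the vertex `7 = 2³ - 1`.
Distinct primes `r, s ∈ {2, 3, 5}` satisfy `r + s ≤ 8`, so `S₈` has an element of cycle type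
`{r, s}`.
-/

open Matrix Module Polynomial

section PrimeOrderEndomorphism

variable {K V : Type*} [Field K] [AddCommGroup V] [Module K V]

/-- `T` permutes the nonzero vectors of `U` in orbits of length `p`. -/
theorem natCard_pow_finrank_eq_one_of_disjoint_ker_sub_one [Finite K] [FiniteDimensional K V]
    {p : ℕ} [Fact p.Prime] {T : End K V} (hT : T ^ p = 1) {U : Submodule K V}
    (hU : U ∈ T.invtSubmodule) (hfix : Disjoint U (LinearMap.ker (T - 1))) :
    (Nat.card K : ZMod p) ^ finrank K U = 1 := by
  classical
  have : Finite V := Module.finite_of_finite K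
  have := Fintype.ofFinite U
  have hmaps : ∀ u ∈ U, T u ∈ U := hU
  let f : Function.End U := ⇑(T.restrict hmaps)
  have hpow (n : ℕ) : f ^ n = ⇑(T.restrict hmaps ^ n) :=
    (hom_coe_pow (fun S : End K U => (⇑S : Function.End U)) rfl (fun _ _ => rfl) _ n).symm
  have hf : f ^ p ^ 1 = 1 := funext fun u => Subtype.ext <| by
    rw [pow_one, hpow, End.pow_restrict, LinearMap.coe_restrict_apply, hT]
    rfl
  have hfixed : Function.fixedPoints f = {0} := by
    refine Set.eq_singleton_iff_unique_mem.mpr ⟨map_zero (T.restrict hmaps), fun u hu => ?_⟩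
    exact Subtype.ext <| Submodule.disjoint_def.mp hfix u u.2 <|
      sub_eq_zero.mpr (congrArg Subtype.val hu)
  have hmod := Equiv.Perm.card_fixedPoints_modEq hf
  rw [← ZMod.natCast_eq_natCast_iff, ← Nat.card_eq_fintype_card, ← Nat.card_eq_fintype_card,
    Module.natCard_eq_pow_finrank (K := K), hfixed] at hmod
  simpa using hmod

theorem ker_mem_invtSubmodule_of_commute {R M : Type*} [Semiring R] [AddCommMonoid M] [Module R M]
    {S T : End R M} (h : Commute S T) : LinearMap.ker T ∈ S.invtSubmodule := fun v hv => by
  rw [LinearMap.mem_ker] at hv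
  rw [Submodule.mem_comap, LinearMap.mem_ker, ← End.mul_apply, ← h.eq, End.mul_apply, hv, map_zero]

theorem commute_aeval {R A : Type*} [CommSemiring R] [Semiring A] [Algebra R A] {a b : A}
    (h : Commute a b) (f : R[X]) : Commute a (aeval b f) := by
  rw [aeval_eq_sum_range]
  exact Commute.sum_right _ _ _ fun i _ => (h.pow_right i).smul_right _

/-- Such a `U` is a simple `K[T]`-module, so `S` fixes either all of it or no nonzero vector. -/
theorem le_ker_sub_one_of_commute [Finite K] [FiniteDimensional K V] {p r : ℕ} [Fact p.Prime]
    [Fact r.Prime] {S T : End K V} (hST : Commute S T) (hS : S ^ r = 1) (hT : T ^ p = 1)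
    {U : Submodule K V} (hUS : U ∈ S.invtSubmodule) (hUT : U ∈ T.invtSubmodule)
    (hfix : Disjoint U (LinearMap.ker (T - 1)))
    (hU : finrank K U = orderOf (Nat.card K : ZMod p))
    (hr : (Nat.card K : ZMod r) ^ finrank K U ≠ 1) :
    U ≤ LinearMap.ker (S - 1) := by
  set W := U ⊓ LinearMap.ker (S - 1)
  have hWT : W ∈ T.invtSubmodule := End.invtSubmodule.inf_mem hUT <|
    ker_mem_invtSubmodule_of_commute (hST.symm.sub_right (Commute.one_right T))
  have hdvd : finrank K U ∣ finrank K W := hU ▸ orderOf_dvd_of_pow_eq_one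
    (natCard_pow_finrank_eq_one_of_disjoint_ker_sub_one hT hWT (hfix.mono_left inf_le_left))
  have hW : 0 < finrank K W := by
    rw [Module.finrank_pos_iff, Submodule.nontrivial_iff_ne_bot]
    intro hbot
    exact hr (natCard_pow_finrank_eq_one_of_disjoint_ker_sub_one hS hUS (disjoint_iff.mpr hbot))
  exact inf_eq_left.mp <|
    Submodule.eq_of_le_of_finrank_le inf_le_left (Nat.le_of_dvd hW hdvd)

theorem exists_irreducible_dvd_ker_aeval_ne_bot {T : End K V} {g : K[X]} (hg : g ≠ 0)
    (hker : LinearMap.ker (aeval T g) ≠ ⊥) :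
    ∃ f, Irreducible f ∧ f ∣ g ∧ LinearMap.ker (aeval T f) ≠ ⊥ := by
  induction g using WfDvdMonoid.induction_on_irreducible with
  | zero => exact absurd rfl hg
  | unit u hu =>
    refine absurd (LinearMap.ker_eq_bot_of_injective ?_) hker
    exact ((End.isUnit_iff _).mp (hu.map (aeval T))).injective
  | mul g f _ hf ih =>
    by_cases hfker : LinearMap.ker (aeval T f) = ⊥
    · rw [map_mul, End.mul_eq_comp, LinearMap.ker_comp_of_ker_eq_bot _ hfker] at hker
      obtain ⟨f', hf', hdvd, hne⟩ := ih (right_ne_zero_of_mul hg) hker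
      exact ⟨f', hf', hdvd.mul_left f, hne⟩
    · exact ⟨f, hf, dvd_mul_right f g, hfker⟩

theorem ker_aeval_cyclotomic_ne_bot {p : ℕ} [Fact p.Prime] {T : End K V} (hT : T ^ p = 1)
    (hT1 : T ≠ 1) : LinearMap.ker (aeval T (cyclotomic p K)) ≠ ⊥ := by
  have hzero : aeval T (cyclotomic p K) * (T - 1) = 0 := by
    simpa [hT] using congrArg (aeval T) (cyclotomic_prime_mul_X_sub_one K p)
  intro hbot
  refine hT1 (sub_eq_zero.mp (LinearMap.ext fun v => ?_))
  exact LinearMap.ker_eq_bot'.mp hbot _ (LinearMap.congr_fun hzero v)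

end PrimeOrderEndomorphism

section Reverse

theorem natDegree_eq_orderOf_of_dvd_cyclotomic {K : Type*} [Field K] [Finite K] {f : K[X]} {n : ℕ}
    (hn : (Nat.card K).Coprime n) (hf : Irreducible f) (hdvd : f ∣ cyclotomic n K) :
    f.natDegree = orderOf (Nat.card K : ZMod n) := by
  have := Fintype.ofFinite K
  obtain ⟨ℓ, _, k, hℓ, hcard⟩ := FiniteField.card' K
  have : Fact ℓ.Prime := ⟨hℓ⟩
  have hℓn : ℓ.Coprime n := by
    rw [Nat.card_eq_fintype_card, hcard] at hn
    exact (Nat.coprime_pow_left_iff k.pos ℓ n).mp hn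
  rw [natDegree_of_dvd_cyclotomic_of_irreducible hcard hℓn hdvd hf, ← orderOf_units,
    ZMod.coe_unitOfCoprime, Nat.card_eq_fintype_card, hcard]

theorem eval_neg_one_eq_zero_of_reverse_eq {R : Type*} [CommRing R] {f : R[X]}
    (hf : f.reverse = f) (hodd : Odd f.natDegree) : f.eval (-1) = 0 := by
  obtain ⟨m, hm⟩ := hodd
  rw [eval_eq_sum_range]
  refine Finset.sum_involution (fun i _ => f.natDegree - i) (fun i hi => ?_)
    (fun i _ _ => by omega) (fun i _ => Finset.mem_range_succ_iff.mpr (Nat.sub_le _ _))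
    (fun i hi => Nat.sub_sub_self (Finset.mem_range_succ_iff.mp hi))
  have hi' : i ≤ f.natDegree := Finset.mem_range_succ_iff.mp hi
  have hcoeff : f.coeff (f.natDegree - i) = f.coeff i := by
    conv_rhs => rw [← hf, coeff_reverse, revAt_le hi']
  have hsign : (-1 : R) ^ (f.natDegree - i) = -(-1) ^ i := by
    rcases Nat.even_or_odd i with h | h
    · rw [h.neg_one_pow, (Nat.Odd.sub_even hi' ⟨m, hm⟩ h).neg_one_pow]
    · rw [h.neg_one_pow, (Nat.Odd.sub_odd ⟨m, hm⟩ h).neg_one_pow, neg_neg]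
  rw [hcoeff, hsign, mul_neg, add_neg_cancel]

theorem eval_one_reverse {R : Type*} [CommSemiring R] (f : R[X]) :
    f.reverse.eval 1 = f.eval 1 := by
  let : Invertible (1 : R) := invertibleOne
  simpa [eval₂_id] using eval₂_reverse_mul_pow (RingHom.id R) 1 f

theorem isCoprime_reverse_of_irreducible {K : Type*} [Field K] {f : K[X]} (hf : Irreducible f)
    (hodd : Odd f.natDegree) (hdeg : f.natDegree ≠ 1) : IsCoprime f f.reverse := by
  refine (hf.coprime_iff_not_dvd).mpr fun ⟨g, hg⟩ => ?_
  have hrev : f.reverse ≠ 0 := fun h => hf.ne_zero (reverse_eq_zero.mp h)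
  obtain ⟨c, rfl⟩ : ∃ c, g = C c := by
    refine ⟨g.coeff 0, eq_C_of_natDegree_eq_zero ?_⟩
    have := reverse_natDegree_le f
    rw [hg, natDegree_mul hf.ne_zero (right_ne_zero_of_mul (hg ▸ hrev))] at this
    omega
  have hroot (x : K) : f.eval x ≠ 0 := hf.not_isRoot_of_natDegree_ne_one hdeg
  have heval : f.reverse.eval 1 = f.eval 1 := eval_one_reverse f
  have hc : c = 1 := by
    rw [hg, eval_mul, eval_C] at heval
    exact mul_left_cancel₀ (hroot 1) (heval.trans (mul_one _).symm)
  rw [hc, C_1, mul_one] at hg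
  exact hroot (-1) (eval_neg_one_eq_zero_of_reverse_eq hg hodd)

theorem aeval_reverse_eq_sum {R A : Type*} [CommSemiring R] [Semiring A] [Algebra R A] (f : R[X])
    (a : A) : aeval a f.reverse =
      ∑ i ∈ Finset.range (f.natDegree + 1), f.coeff i • a ^ (f.natDegree - i) := by
  rw [aeval_eq_sum_range' (Nat.lt_succ_of_le f.reverse_natDegree_le), ← Finset.sum_range_reflect]
  refine Finset.sum_congr rfl fun i hi => ?_
  have hi' : i ≤ f.natDegree := Finset.mem_range_succ_iff.mp hi
  rw [Nat.succ_sub_one, coeff_reverse, revAt_le (Nat.sub_le _ _), Nat.sub_sub_self hi']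

end Reverse

section ReciprocalFactor

variable {K V : Type*} [Field K] [AddCommGroup V] [Module K V]

theorem disjoint_ker_aeval_ker_sub_one (T : End K V) {f : K[X]} (hf : f.eval 1 ≠ 0) :
    Disjoint (LinearMap.ker (aeval T f)) (LinearMap.ker (T - 1)) := by
  have hcoprime : IsCoprime (X - C 1) f :=
    (irreducible_X_sub_C 1).coprime_iff_not_dvd.mpr fun h => hf (dvd_iff_isRoot.mp h)
  simpa using disjoint_ker_aeval_of_isCoprime T hcoprime.symm

theorem orderOf_natCard_le_finrank_ker_aeval [Finite K] [FiniteDimensional K V] {p : ℕ}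
    [Fact p.Prime] {T : End K V} (hT : T ^ p = 1) {f : K[X]} (hf : f.eval 1 ≠ 0)
    (hker : LinearMap.ker (aeval T f) ≠ ⊥) :
    orderOf (Nat.card K : ZMod p) ≤ finrank K (LinearMap.ker (aeval T f)) := by
  have hinv : LinearMap.ker (aeval T f) ∈ T.invtSubmodule :=
    ker_mem_invtSubmodule_of_commute (commute_aeval (Commute.refl T) f)
  refine Nat.le_of_dvd ?_ <| orderOf_dvd_of_pow_eq_one <|
    natCard_pow_finrank_eq_one_of_disjoint_ker_sub_one hT hinv (disjoint_ker_aeval_ker_sub_one T hf)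
  exact Module.finrank_pos_iff.mpr (Submodule.nontrivial_iff_ne_bot.mpr hker)

theorem exists_isCoprime_reverse_ker_aeval_ne_bot [Finite K] {p : ℕ} [Fact p.Prime] {T : End K V}
    (hT : T ^ p = 1) (hT1 : T ≠ 1) (hodd : Odd (orderOf (Nat.card K : ZMod p)))
    (hone : orderOf (Nat.card K : ZMod p) ≠ 1) :
    ∃ f : K[X], IsCoprime f f.reverse ∧ f.eval 1 ≠ 0 ∧ LinearMap.ker (aeval T f) ≠ ⊥ := by
  have hcoprime : (Nat.card K).Coprime p :=
    (ZMod.isUnit_iff_coprime _ _).mp (orderOf_pos_iff.mp hodd.pos).isUnit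
  obtain ⟨f, hf, hdvd, hker⟩ := exists_irreducible_dvd_ker_aeval_ne_bot (cyclotomic_ne_zero p K)
    (ker_aeval_cyclotomic_ne_bot hT hT1)
  have hdeg := natDegree_eq_orderOf_of_dvd_cyclotomic hcoprime hf hdvd
  rw [← hdeg] at hodd hone
  exact ⟨f, isCoprime_reverse_of_irreducible hf hodd hone, hf.not_isRoot_of_natDegree_ne_one hone,
    hker⟩

end ReciprocalFactor

section Symplectic

variable {l : Type*} [DecidableEq l] [Fintype l]

theorem pow_mul_J_mul_transpose_aeval {R : Type*} [CommRing R] {A : Matrix (l ⊕ l) (l ⊕ l) R}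
    (hA : A ∈ symplecticGroup l R) (f : R[X]) :
    A ^ f.natDegree * J l R * (aeval A f)ᵀ = aeval A f.reverse * J l R := by
  rw [aeval_eq_sum_range, aeval_reverse_eq_sum, transpose_sum, Finset.mul_sum, Finset.sum_mul]
  refine Finset.sum_congr rfl fun i hi => ?_
  have hi' : i ≤ f.natDegree := Finset.mem_range_succ_iff.mp hi
  calc A ^ f.natDegree * J l R * (f.coeff i • A ^ i)ᵀ
      = f.coeff i • (A ^ (f.natDegree - i) * (A ^ i * J l R * (A ^ i)ᵀ)) := by
        rw [transpose_smul, mul_smul_comm, ← mul_assoc, ← mul_assoc, ← pow_add,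
          Nat.sub_add_cancel hi']
    _ = f.coeff i • A ^ (f.natDegree - i) * J l R := by
        rw [SymplecticGroup.mem_iff.mp (pow_mem hA i), smul_mul_assoc]

variable {K : Type*} [Field K]

theorem rank_aeval_reverse {A : Matrix (l ⊕ l) (l ⊕ l) K} (hA : A ∈ symplecticGroup l K)
    (f : K[X]) : (aeval A f.reverse).rank = (aeval A f).rank := by
  have hJ := isUnit_det_J l K
  have hpow : IsUnit (A ^ f.natDegree).det := SymplecticGroup.symplectic_det (pow_mem hA _)
  rw [← rank_mul_eq_left_of_isUnit_det _ _ hJ, ← pow_mul_J_mul_transpose_aeval hA, mul_assoc,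
    rank_mul_eq_right_of_isUnit_det _ _ hpow, rank_mul_eq_right_of_isUnit_det _ _ hJ,
    rank_transpose]

/-- The natural representation of the symplectic group on column vectors. -/
noncomputable def symplecticToEnd (l R : Type*) [DecidableEq l] [Fintype l] [CommRing R] :
    symplecticGroup l R →* End R (l ⊕ l → R) :=
  (toLinAlgEquiv' : Matrix (l ⊕ l) (l ⊕ l) R ≃ₐ[R] _).toMonoidHom.comp
    (symplecticGroup l R).subtype

theorem symplecticToEnd_injective (l R : Type*) [DecidableEq l] [Fintype l] [CommRing R] :
    Function.Injective (symplecticToEnd l R) :=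
  toLinAlgEquiv'.injective.comp Subtype.val_injective

theorem aeval_symplecticToEnd (x : symplecticGroup l K) (f : K[X]) :
    aeval (symplecticToEnd l K x) f = (aeval x.1 f).mulVecLin :=
  aeval_algHom_apply (toLinAlgEquiv' : Matrix (l ⊕ l) (l ⊕ l) K ≃ₐ[K] _) x.1 f

theorem finrank_ker_aeval_reverse (x : symplecticGroup l K) (f : K[X]) :
    finrank K (LinearMap.ker (aeval (symplecticToEnd l K x) f.reverse)) =
      finrank K (LinearMap.ker (aeval (symplecticToEnd l K x) f)) := by
  have hrank := rank_aeval_reverse x.2 f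
  have hrev := (aeval x.1 f.reverse).mulVecLin.finrank_range_add_finrank_ker
  have hf := (aeval x.1 f).mulVecLin.finrank_range_add_finrank_ker
  rw [aeval_symplecticToEnd, aeval_symplecticToEnd]
  rw [Matrix.rank, Matrix.rank] at hrank
  omega

theorem finrank_ker_aeval_le_card (x : symplecticGroup l K) {f : K[X]}
    (hf : IsCoprime f f.reverse) :
    finrank K (LinearMap.ker (aeval (symplecticToEnd l K x) f)) ≤ Fintype.card l := by
  have hsum := Submodule.finrank_add_finrank_le_of_disjoint
    (disjoint_ker_aeval_of_isCoprime (symplecticToEnd l K x) hf)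
  rw [finrank_ker_aeval_reverse, finrank_fintype_fun_eq_card, Fintype.card_sum] at hsum
  omega

variable [Finite K] {p : ℕ} [Fact p.Prime]

theorem exists_isCoprime_reverse_ker_aeval_symplecticToEnd_ne_bot {x : symplecticGroup l K}
    (hx : orderOf x = p) (hodd : Odd (orderOf (Nat.card K : ZMod p)))
    (hone : orderOf (Nat.card K : ZMod p) ≠ 1) :
    ∃ f : K[X], IsCoprime f f.reverse ∧ f.eval 1 ≠ 0 ∧
      LinearMap.ker (aeval (symplecticToEnd l K x) f) ≠ ⊥ := by
  rw [← orderOf_injective _ (symplecticToEnd_injective l K)] at hx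
  refine exists_isCoprime_reverse_ker_aeval_ne_bot (orderOf_dvd_iff_pow_eq_one.mp hx.dvd) ?_
    hodd hone
  intro hT
  exact (Fact.out : p.Prime).ne_one (hx ▸ orderOf_eq_one_iff.mpr hT)

theorem orderOf_natCard_le_card_of_orderOf_eq_prime {x : symplecticGroup l K}
    (hx : orderOf x = p) (hodd : Odd (orderOf (Nat.card K : ZMod p)))
    (hone : orderOf (Nat.card K : ZMod p) ≠ 1) :
    orderOf (Nat.card K : ZMod p) ≤ Fintype.card l := by
  obtain ⟨f, hf, hf1, hker⟩ :=
    exists_isCoprime_reverse_ker_aeval_symplecticToEnd_ne_bot hx hodd hone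
  have hT : symplecticToEnd l K x ^ p = 1 := by
    rw [← map_pow, ← hx, pow_orderOf_eq_one, map_one]
  exact (orderOf_natCard_le_finrank_ker_aeval hT hf1 hker).trans (finrank_ker_aeval_le_card x hf)

/-- The space is the direct sum of the kernels of `f(x)` and `f*(x)`, where `f*` is the reciprocal
of `f`, and `x` acts irreducibly on both. -/
theorem eq_one_of_commute_of_orderOf_natCard_eq_card {r : ℕ} [Fact r.Prime]
    {x y : symplecticGroup l K} (hx : orderOf x = p) (hy : y ^ r = 1) (hyx : Commute y x)
    (hp : orderOf (Nat.card K : ZMod p) = Fintype.card l) (hodd : Odd (Fintype.card l))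
    (hone : Fintype.card l ≠ 1) (hr : (Nat.card K : ZMod r) ^ Fintype.card l ≠ 1) : y = 1 := by
  obtain ⟨f, hf, hf1, hker⟩ :=
    exists_isCoprime_reverse_ker_aeval_symplecticToEnd_ne_bot hx (hp ▸ hodd) (hp ▸ hone)
  set T := symplecticToEnd l K x
  set S := symplecticToEnd l K y
  have hT : T ^ p = 1 := by rw [← map_pow, ← hx, pow_orderOf_eq_one, map_one]
  have hS : S ^ r = 1 := by rw [← map_pow, hy, map_one]
  have hST : Commute S T := hyx.map _
  have hdim : finrank K (LinearMap.ker (aeval T f)) = Fintype.card l :=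
    (finrank_ker_aeval_le_card x hf).antisymm
      (hp ▸ orderOf_natCard_le_finrank_ker_aeval hT hf1 hker)
  have hdim_rev : finrank K (LinearMap.ker (aeval T f.reverse)) = Fintype.card l :=
    (finrank_ker_aeval_reverse x f).trans hdim
  have hle {g : K[X]} (hg1 : g.eval 1 ≠ 0)
      (hg : finrank K (LinearMap.ker (aeval T g)) = Fintype.card l) :
      LinearMap.ker (aeval T g) ≤ LinearMap.ker (S - 1) :=
    le_ker_sub_one_of_commute hST hS hT (ker_mem_invtSubmodule_of_commute (commute_aeval hST g))
      (ker_mem_invtSubmodule_of_commute (commute_aeval (Commute.refl T) g))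
      (disjoint_ker_aeval_ker_sub_one T hg1) (hg.trans hp.symm) (hg ▸ hr)
  have htop : LinearMap.ker (aeval T f) ⊔ LinearMap.ker (aeval T f.reverse) = ⊤ := by
    apply Submodule.eq_top_of_finrank_eq
    have hsup := Submodule.finrank_sup_add_finrank_inf_eq (LinearMap.ker (aeval T f))
      (LinearMap.ker (aeval T f.reverse))
    rw [(disjoint_ker_aeval_of_isCoprime T hf).eq_bot, finrank_bot, hdim, hdim_rev] at hsup
    rw [finrank_fintype_fun_eq_card, Fintype.card_sum]
    exact hsup
  have hfixed : LinearMap.ker (S - 1) = ⊤ :=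
    top_le_iff.mp <| htop ▸ sup_le (hle hf1 hdim) (hle (by rwa [eval_one_reverse]) hdim_rev)
  apply symplecticToEnd_injective l K
  rw [map_one]
  exact sub_eq_zero.mp (LinearMap.ker_eq_top.mp hfixed)

theorem orderOf_ne_mul_of_orderOf_natCard_eq_card {r : ℕ} [Fact r.Prime]
    (hp : orderOf (Nat.card K : ZMod p) = Fintype.card l) (hodd : Odd (Fintype.card l))
    (hone : Fintype.card l ≠ 1) (hr : (Nat.card K : ZMod r) ^ Fintype.card l ≠ 1)
    (x : symplecticGroup l K) : orderOf x ≠ p * r := by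
  intro hx
  have hpos : p ≠ 0 ∧ r ≠ 0 := ⟨NeZero.ne p, NeZero.ne r⟩
  have hxr : orderOf (x ^ r) = p := by
    rw [orderOf_pow_of_dvd hpos.2 (hx ▸ dvd_mul_left r p), hx,
      Nat.mul_div_cancel _ (Nat.pos_of_ne_zero hpos.2)]
  have hxp : (x ^ p) ^ r = 1 := by rw [← pow_mul, ← hx, pow_orderOf_eq_one]
  have hxp1 : x ^ p = 1 := eq_one_of_commute_of_orderOf_natCard_eq_card hxr hxp
    (Commute.pow_pow_self x p r) hp hodd hone hr
  have hdvd : p * r ∣ p * 1 := by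
    rw [mul_one, ← hx]
    exact orderOf_dvd_of_pow_eq_one hxp1
  exact (Fact.out : r.Prime).ne_one (Nat.dvd_one.mp (Nat.dvd_of_mul_dvd_mul_left
    (Nat.pos_of_ne_zero hpos.1) hdvd))

end Symplectic

section Permutation

variable (l R : Type*) [LinearOrder l] [CommRing R]

/-- A symplectic basis of the vectors of coordinate sum zero modulo the all-ones vector, for the
dot product in characteristic two. The coordinates are `x k = inl (inl k)`, `y k = inl (inr k)`,
`inr true` and `inr false`; the column `inl i` is supported on `inr true`, `x i` and `x k, y k`
for `k < i`, and the column `inr i` on `x i` and `y i`. -/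
def evenBasis : Matrix ((l ⊕ l) ⊕ Bool) (l ⊕ l) R
  | .inl (.inl k), .inl i => if k ≤ i then 1 else 0
  | .inl (.inr k), .inl i => if k < i then 1 else 0
  | .inr b, .inl _ => if b then 1 else 0
  | .inl (.inl k), .inr i => if k = i then 1 else 0
  | .inl (.inr k), .inr i => if k = i then 1 else 0
  | .inr _, .inr _ => 0

variable [Fintype l]

/-- The matrix of dot products of the columns of `evenBasis l R` with their images under `σ`. -/
def evenGram (σ : Equiv.Perm ((l ⊕ l) ⊕ Bool)) : Matrix (l ⊕ l) (l ⊕ l) R :=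
  (evenBasis l R)ᵀ * σ⁻¹.permMatrix R * evenBasis l R

theorem transpose_evenGram (σ : Equiv.Perm ((l ⊕ l) ⊕ Bool)) :
    (evenGram l R σ)ᵀ = evenGram l R σ⁻¹ := by
  simp only [evenGram, transpose_mul, transpose_transpose, Matrix.mul_assoc, transpose_permMatrix]

variable [CharP R 2]

theorem one_vecMul_evenBasis : 1 ᵥ* evenBasis l R = 0 := by
  have htwo := CharTwo.add_self_eq_zero (1 : R)
  funext j
  simp only [vecMul, one_dotProduct, Fintype.sum_sum_type, Fintype.sum_bool, Pi.zero_apply]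
  rcases j with j | j <;> simp only [evenBasis, ← Finset.sum_add_distrib]
  · have hind (k : l) : ((if k ≤ j then 1 else 0) + (if k < j then 1 else 0) : R) =
        if k = j then 1 else 0 := by grind
    simp [hind, htwo]
  · simp [CharTwo.add_self_eq_zero]

theorem transpose_evenBasis_mul_evenBasis_inl_inl (i j : l) :
    ((evenBasis l R)ᵀ * evenBasis l R) (.inl i) (.inl j) = 0 := by
  have htwo := CharTwo.add_self_eq_zero (1 : R)
  have hind (k : l) : ((if k ≤ i then 1 else 0) * (if k ≤ j then 1 else 0) +
      (if k < i then 1 else 0) * (if k < j then 1 else 0) : R) =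
        if k = min i j then 1 else 0 := by grind
  simp only [mul_apply, transpose_apply, evenBasis, Fintype.sum_sum_type, Fintype.sum_bool,
    ← Finset.sum_add_distrib, hind]
  simp [htwo]

theorem transpose_evenBasis_mul_evenBasis_inr (i : l) (j : l ⊕ l) :
    ((evenBasis l R)ᵀ * evenBasis l R) (.inr i) j = J l R (.inr i) j := by
  simp only [mul_apply, transpose_apply, Fintype.sum_sum_type, Fintype.sum_bool, evenBasis,
    ite_mul, one_mul, zero_mul, Finset.sum_ite_eq', Finset.mem_univ]
  rcases j with j | j <;> simp only [J, fromBlocks_apply₂₁, fromBlocks_apply₂₂,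
    one_apply, Matrix.zero_apply] <;> grind [CharTwo.add_self_eq_zero]

theorem transpose_evenBasis_mul_evenBasis : (evenBasis l R)ᵀ * evenBasis l R = J l R := by
  ext (i | i) j
  · rcases j with j | j
    · simp [transpose_evenBasis_mul_evenBasis_inl_inl, J]
    · rw [← transpose_apply ((evenBasis l R)ᵀ * evenBasis l R), transpose_mul, transpose_transpose,
        transpose_evenBasis_mul_evenBasis_inr]
      simp [J, one_apply, eq_comm, CharTwo.neg_eq]
  · exact transpose_evenBasis_mul_evenBasis_inr l R i j

theorem evenBasis_mul_J_mul_transpose_apply (a b : (l ⊕ l) ⊕ Bool) :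
    (evenBasis l R * J l R * (evenBasis l R)ᵀ) a b =
      ∑ i, evenBasis l R a (.inr i) * evenBasis l R b (.inl i) +
        ∑ i, evenBasis l R b (.inr i) * evenBasis l R a (.inl i) := by
  simp [mul_apply, J, Fintype.sum_sum_type, one_apply, CharTwo.neg_eq, mul_comm]

theorem evenBasis_mul_J_mul_transpose :
    evenBasis l R * J l R * (evenBasis l R)ᵀ =
      1 + vecMulVec 1 (1 + Pi.single (.inr false) 1) + vecMulVec (Pi.single (.inr false) 1) 1 := by
  ext a b
  rw [evenBasis_mul_J_mul_transpose_apply]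
  rcases a with (i | i) | (_ | _) <;> rcases b with (j | j) | (_ | _) <;>
    simp only [evenBasis, ite_mul, one_mul, zero_mul, Finset.sum_ite_eq, Finset.mem_univ,
      Finset.sum_const_zero, one_apply, Matrix.add_apply, vecMulVec_apply, Pi.add_apply,
      Pi.one_apply, Pi.single_apply] <;>
    grind [CharTwo.add_self_eq_zero]

theorem evenGram_one : evenGram l R 1 = J l R := by
  rw [evenGram, inv_one, permMatrix_one, Matrix.mul_one, transpose_evenBasis_mul_evenBasis]

theorem evenGram_mul_J_mul_evenGram (σ τ : Equiv.Perm ((l ⊕ l) ⊕ Bool)) :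
    evenGram l R σ * J l R * evenGram l R τ = evenGram l R (σ * τ) := by
  have hleft : ((evenBasis l R)ᵀ * σ⁻¹.permMatrix R) *ᵥ 1 = 0 := by
    rw [← mulVec_mulVec, permMatrix_mulVec, mulVec_transpose]
    exact one_vecMul_evenBasis l R
  have hright : 1 ᵥ* (τ⁻¹.permMatrix R * evenBasis l R) = 0 := by
    rw [← vecMul_vecMul, vecMul_permMatrix]
    exact one_vecMul_evenBasis l R
  have hzero (w : (l ⊕ l) ⊕ Bool → R) : vecMulVec w (0 : l ⊕ l → R) = 0 :=
    Matrix.ext fun _ _ => mul_zero _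
  calc evenGram l R σ * J l R * evenGram l R τ
      = (evenBasis l R)ᵀ * σ⁻¹.permMatrix R * (evenBasis l R * J l R * (evenBasis l R)ᵀ) *
          (τ⁻¹.permMatrix R * evenBasis l R) := by simp only [evenGram, Matrix.mul_assoc]
    _ = (evenBasis l R)ᵀ * σ⁻¹.permMatrix R * (τ⁻¹.permMatrix R * evenBasis l R) := by
        rw [evenBasis_mul_J_mul_transpose, Matrix.mul_add, Matrix.mul_add, mul_vecMulVec, hleft,
          zero_vecMulVec, add_zero, Matrix.mul_one, Matrix.add_mul,
          Matrix.mul_assoc _ (vecMulVec _ _), vecMulVec_mul, hright,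
          hzero, Matrix.mul_zero, add_zero]
    _ = evenGram l R (σ * τ) := by
        rw [evenGram, _root_.mul_inv_rev, permMatrix_mul]
        simp only [Matrix.mul_assoc]

theorem J_mul_J_of_charTwo : J l R * J l R = 1 := by
  rw [J_squared]
  exact Matrix.ext fun _ _ => CharTwo.neg_eq _

theorem J_mul_evenGram_mem_symplecticGroup (σ : Equiv.Perm ((l ⊕ l) ⊕ Bool)) :
    J l R * evenGram l R σ ∈ symplecticGroup l R := by
  rw [SymplecticGroup.mem_iff, transpose_mul, transpose_evenGram, J_transpose]
  calc J l R * evenGram l R σ * J l R * (evenGram l R σ⁻¹ * -J l R)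
      = J l R * (evenGram l R σ * J l R * evenGram l R σ⁻¹) * -J l R := by simp only [mul_assoc]
    _ = J l R := by
        rw [evenGram_mul_J_mul_evenGram, mul_inv_cancel, evenGram_one, J_squared, neg_one_mul,
          neg_neg]

/-- The action of permutations on the vectors of coordinate sum zero modulo the all-ones vector,
written in the basis `evenBasis l R`. -/
def permToSymplectic : Equiv.Perm ((l ⊕ l) ⊕ Bool) →* symplecticGroup l R where
  toFun σ := ⟨J l R * evenGram l R σ, J_mul_evenGram_mem_symplecticGroup l R σ⟩
  map_one' := Subtype.ext <| show J l R * evenGram l R 1 = 1 by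
    rw [evenGram_one, J_mul_J_of_charTwo]
  map_mul' σ τ := Subtype.ext <|
    show J l R * evenGram l R (σ * τ) = J l R * evenGram l R σ * (J l R * evenGram l R τ) by
      rw [← evenGram_mul_J_mul_evenGram]
      simp only [mul_assoc]

variable {l R}

theorem evenBasis_mul_J_mul_transpose_mulVec {v : (l ⊕ l) ⊕ Bool → R} (hv : 1 ⬝ᵥ v = 0) :
    ∃ c : R, (evenBasis l R * J l R * (evenBasis l R)ᵀ) *ᵥ v = v + c • 1 := by
  refine ⟨(1 + Pi.single (.inr false) 1) ⬝ᵥ v, ?_⟩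
  rw [evenBasis_mul_J_mul_transpose, add_mulVec, add_mulVec, one_mulVec, vecMulVec_mulVec,
    vecMulVec_mulVec, hv]
  simp only [op_smul_eq_smul, zero_smul, add_zero]

theorem vecMul_evenBasis_mul_J_mul_transpose {v : (l ⊕ l) ⊕ Bool → R} (hv : v ⬝ᵥ 1 = 0) :
    ∃ c : R, v ᵥ* (evenBasis l R * J l R * (evenBasis l R)ᵀ) = v + c • 1 := by
  refine ⟨v ⬝ᵥ Pi.single (.inr false) 1, ?_⟩
  rw [evenBasis_mul_J_mul_transpose, vecMul_add, vecMul_add, vecMul_one, vecMul_vecMulVec,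
    vecMul_vecMulVec, hv]
  simp

theorem dotProduct_mulVec_evenGram (σ : Equiv.Perm ((l ⊕ l) ⊕ Bool))
    {v w : (l ⊕ l) ⊕ Bool → R} (hv : 1 ⬝ᵥ v = 0) (hw : w ⬝ᵥ 1 = 0) :
    w ⬝ᵥ (evenBasis l R * J l R * evenGram l R σ * (J l R * (evenBasis l R)ᵀ)) *ᵥ v =
      w ⬝ᵥ v ∘ ⇑σ⁻¹ := by
  obtain ⟨c, hc⟩ := evenBasis_mul_J_mul_transpose_mulVec hv
  obtain ⟨d, hd⟩ := vecMul_evenBasis_mul_J_mul_transpose hw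
  have hassoc : evenBasis l R * J l R * evenGram l R σ * (J l R * (evenBasis l R)ᵀ) =
      evenBasis l R * J l R * (evenBasis l R)ᵀ *
        (σ⁻¹.permMatrix R * (evenBasis l R * J l R * (evenBasis l R)ᵀ)) := by
    simp only [evenGram, Matrix.mul_assoc]
  have hcard : (1 : (l ⊕ l) ⊕ Bool → R) ⬝ᵥ 1 = 0 := by
    simp [dotProduct, CharTwo.add_self_eq_zero, CharTwo.two_eq_zero]
  have hsum : 1 ⬝ᵥ v ∘ ⇑σ⁻¹ = 0 := by
    rw [← hv, one_dotProduct, one_dotProduct]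
    exact Equiv.sum_comp σ⁻¹ v
  have hconst : (v + c • 1) ∘ ⇑σ⁻¹ = v ∘ ⇑σ⁻¹ + c • 1 := rfl
  rw [hassoc, ← mulVec_mulVec, dotProduct_mulVec, hd, ← mulVec_mulVec, hc, permMatrix_mulVec,
    hconst]
  simp only [add_dotProduct, dotProduct_add, smul_dotProduct, dotProduct_smul, hsum, hcard, hw,
    smul_zero, add_zero]

theorem eq_one_of_dotProduct_comp_eq {α R : Type*} [Fintype α] [CommRing R] [Nontrivial R]
    (hα : 5 ≤ Fintype.card α) {σ : Equiv.Perm α}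
    (hσ : ∀ v w : α → R, 1 ⬝ᵥ v = 0 → w ⬝ᵥ 1 = 0 → w ⬝ᵥ v ∘ ⇑σ = w ⬝ᵥ v) : σ = 1 := by
  classical
  by_contra hne
  obtain ⟨i, hi⟩ : ∃ i, σ i ≠ i := by
    by_contra! hfix
    exact hne (Equiv.ext hfix)
  have hchoose (s : Finset α) (hs : s.card ≤ 4) : ∃ a, a ∉ s := by
    by_contra! hall
    have := Finset.card_univ (α := α) ▸ Finset.card_le_card fun a _ => hall a
    omega
  obtain ⟨i', hi'⟩ := hchoose {i, σ i} (Finset.card_le_two.trans (by norm_num))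
  obtain ⟨j, hj⟩ := hchoose {i, i', σ i, σ i'} Finset.card_le_four
  simp only [Finset.mem_insert, Finset.mem_singleton, not_or] at hi' hj
  have h := hσ (Pi.single (σ i) 1 - Pi.single j 1) (Pi.single i 1 - Pi.single i' 1)
    (by simp) (by simp)
  simp [sub_dotProduct, hi, hi', hj] at h

theorem permToSymplectic_injective [Nontrivial R] [Nontrivial l] :
    Function.Injective (permToSymplectic l R) := by
  rw [injective_iff_map_eq_one]
  intro σ hσ
  have hgram : evenGram l R σ = evenGram l R 1 := by
    have hone : J l R * evenGram l R σ = J l R * evenGram l R 1 :=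
      congrArg Subtype.val (hσ.trans (map_one (permToSymplectic l R)).symm)
    simpa [← mul_assoc, J_mul_J_of_charTwo] using congrArg (J l R * ·) hone
  have hcard : 5 ≤ Fintype.card ((l ⊕ l) ⊕ Bool) := by
    have := Fintype.one_lt_card (α := l)
    simp only [Fintype.card_sum, Fintype.card_bool]
    omega
  refine inv_eq_one.mp (eq_one_of_dotProduct_comp_eq (R := R) hcard fun v w hv hw => ?_)
  rw [← dotProduct_mulVec_evenGram σ hv hw, hgram, dotProduct_mulVec_evenGram 1 hv hw]
  rfl

end Permutation

section Cardinality

theorem natCard_symplecticGroup_dvd_natCard_GL {l m : Type*} [DecidableEq l] [Fintype l]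
    [DecidableEq m] [Fintype m] (R : Type*) [CommRing R] (e : l ⊕ l ≃ m) :
    Nat.card (symplecticGroup l R) ∣ Nat.card (GL m R) := by
  let toMatrix : symplecticGroup l R →* Matrix m m R :=
    (reindexRingEquiv R e).toMonoidHom.comp (symplecticGroup l R).subtype
  have hinj : Function.Injective toMatrix :=
    (reindexRingEquiv R e).injective.comp Subtype.val_injective
  exact Subgroup.card_dvd_of_injective toMatrix.toHomUnits fun x y hxy =>
    hinj (congrArg Units.val hxy)

theorem orderOf_natCard_mem_Icc_of_dvd_natCard_GL {K : Type*} [Field K] [Finite K] {n p : ℕ}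
    [Fact p.Prime] (hdvd : p ∣ Nat.card (GL (Fin n) K)) (hp : ¬ p ∣ Nat.card K) :
    orderOf (Nat.card K : ZMod p) ∈ Finset.Icc 1 n := by
  have := Fintype.ofFinite K
  rw [card_GL_field, Prime.dvd_finsetProd_iff (Fact.out : p.Prime).prime] at hdvd
  obtain ⟨i, -, hi⟩ := hdvd
  rw [← Nat.card_eq_fintype_card, ← ZMod.natCast_eq_zero_iff,
    Nat.cast_sub (Nat.pow_le_pow_right Nat.card_pos i.is_lt.le), sub_eq_zero, Nat.cast_pow,
    Nat.cast_pow] at hi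
  rw [← ZMod.natCast_eq_zero_iff] at hp
  have hone : (Nat.card K : ZMod p) ^ (n - i) = 1 :=
    mul_left_cancel₀ (pow_ne_zero i hp) (by rw [pow_mul_pow_sub _ i.is_lt.le, hi, mul_one])
  have hpos : 0 < n - i := Nat.sub_pos_of_lt i.is_lt
  exact Finset.mem_Icc.mpr ⟨orderOf_pos_iff.mpr (isOfFinOrder_iff_pow_eq_one.mpr ⟨_, hpos, hone⟩),
    (orderOf_le_of_pow_eq_one hpos hone).trans (Nat.sub_le n i)⟩

theorem orderOf_two_mem_of_prime_dvd_natCard_symplecticGroup {p : ℕ} [Fact p.Prime]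
    (hdvd : p ∣ Nat.card (symplecticGroup (Fin 3) (ZMod 2))) (h2 : ¬ p ∣ 2) :
    orderOf (2 : ZMod p) ∈ ({1, 2, 3, 4, 6} : Finset ℕ) := by
  have hcard : ((Nat.card (ZMod 2) : ℕ) : ZMod p) = 2 := by rw [Nat.card_zmod, Nat.cast_ofNat]
  have hmem := orderOf_natCard_mem_Icc_of_dvd_natCard_GL
    (hdvd.trans (natCard_symplecticGroup_dvd_natCard_GL (ZMod 2) finSumFinEquiv))
    (by rwa [Nat.card_zmod])
  obtain ⟨x, hx⟩ := exists_prime_orderOf_dvd_card' p hdvd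
  have hodd := orderOf_natCard_le_card_of_orderOf_eq_prime hx
  rw [hcard] at hmem hodd
  rw [Fintype.card_fin] at hodd
  generalize orderOf (2 : ZMod p) = d at *
  have hd : d ≠ 5 := by
    rintro rfl
    exact absurd (hodd (by decide) (by decide)) (by decide)
  rw [Finset.mem_Icc] at hmem
  simp only [Finset.mem_insert, Finset.mem_singleton]
  omega

theorem le_seven_of_prime_dvd_natCard_symplecticGroup {p : ℕ} (hp : p.Prime)
    (hdvd : p ∣ Nat.card (symplecticGroup (Fin 3) (ZMod 2))) : p ≤ 7 := by
  have := Fact.mk hp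
  by_cases h2 : p ∣ 2
  · exact (Nat.le_of_dvd two_pos h2).trans (by norm_num)
  have hmem := orderOf_two_mem_of_prime_dvd_natCard_symplecticGroup hdvd h2
  have hpow : p ∣ 2 ^ orderOf (2 : ZMod p) - 1 := by
    rw [← ZMod.natCast_eq_zero_iff, Nat.cast_sub Nat.one_le_two_pow, Nat.cast_pow,
      Nat.cast_ofNat, pow_orderOf_eq_one, Nat.cast_one, sub_self]
  have hfactorial : ∀ d ∈ ({1, 2, 3, 4, 6} : Finset ℕ), 2 ^ d - 1 ∣ Nat.factorial 7 := by decide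
  exact hp.dvd_factorial.mp (hpow.trans (hfactorial _ hmem))

end Cardinality

section ElementOrders

theorem exists_perm_orderOf_eq_mul {α : Type*} [Fintype α] {r s : ℕ} (hr : 2 ≤ r) (hs : 2 ≤ s)
    (hrs : r.Coprime s) (hcard : r + s ≤ Fintype.card α) :
    ∃ σ : Equiv.Perm α, orderOf σ = r * s := by
  classical
  obtain ⟨σ, hσ⟩ := (Equiv.Perm.exists_with_cycleType_iff α (m := {r, s})).mpr
    ⟨by simpa using hcard, by simp [hr, hs]⟩
  refine ⟨σ, ?_⟩
  rw [← σ.lcm_cycleType, hσ]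
  rw [Multiset.insert_eq_cons, Multiset.lcm_cons, Multiset.lcm_singleton, normalize_eq]
  exact hrs.lcm_eq_mul

theorem two_pow_three_ne_one_of_prime_ne_seven {r : ℕ} (hr : r.Prime) (h7 : r ≠ 7) :
    (2 : ZMod r) ^ 3 ≠ 1 := by
  intro h
  have hdvd : r ∣ 7 := by
    rw [← ZMod.natCast_eq_zero_iff]
    linear_combination h
  exact h7 ((Nat.prime_dvd_prime_iff_eq hr (by norm_num)).mp hdvd)

theorem orderOf_symplecticGroup_ne_seven_mul {r : ℕ} (hr : r.Prime) (h7 : r ≠ 7)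
    (x : symplecticGroup (Fin 3) (ZMod 2)) : orderOf x ≠ 7 * r := by
  have horder : orderOf (2 : ZMod 7) = 3 := orderOf_eq_prime (by decide) (by decide)
  have : Fact (Nat.Prime 7) := ⟨by norm_num⟩
  have : Fact r.Prime := ⟨hr⟩
  have hcard : Nat.card (ZMod 2) = 2 := Nat.card_zmod 2
  refine orderOf_ne_mul_of_orderOf_natCard_eq_card ?_ (by decide) (by decide) ?_ x
  · rw [hcard, Fintype.card_fin]
    exact horder
  · rw [hcard, Fintype.card_fin]
    exact two_pow_three_ne_one_of_prime_ne_seven hr h7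

theorem add_le_eight_of_orderOf_symplecticGroup {r s : ℕ} (hr : r.Prime) (hs : s.Prime)
    (hrs : r ≠ s) {x : symplecticGroup (Fin 3) (ZMod 2)} (hx : orderOf x = r * s) :
    r + s ≤ 8 := by
  have hsmall {q : ℕ} (hq : q.Prime) (hq7 : q ≠ 7) (hq_le : q ≤ 7) : q = 2 ∨ q = 3 ∨ q = 5 := by
    interval_cases q <;> revert hq hq7 <;> decide
  have hr7 : r ≠ 7 := by
    rintro rfl
    exact orderOf_symplecticGroup_ne_seven_mul hs hrs.symm x hx
  have hs7 : s ≠ 7 := by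
    rintro rfl
    exact orderOf_symplecticGroup_ne_seven_mul hr hrs x (hx.trans (mul_comm r 7))
  have hdvd : r * s ∣ Nat.card (symplecticGroup (Fin 3) (ZMod 2)) := hx ▸ orderOf_dvd_natCard x
  have hr_mem := hsmall hr hr7
    (le_seven_of_prime_dvd_natCard_symplecticGroup hr (dvd_of_mul_right_dvd hdvd))
  have hs_mem := hsmall hs hs7
    (le_seven_of_prime_dvd_natCard_symplecticGroup hs (dvd_of_mul_left_dvd hdvd))
  omega

end ElementOrders

theorem exists_perm_eight_injective_symplecticGroup :
    ∃ φ : Equiv.Perm (Fin 8) →* symplecticGroup (Fin 3) (ZMod 2), Function.Injective φ := by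
  let e : Fin 8 ≃ (Fin 3 ⊕ Fin 3) ⊕ Bool := (Fintype.equivFinOfCardEq (by decide)).symm
  exact ⟨(permToSymplectic (Fin 3) (ZMod 2)).comp (Equiv.permCongrHom e).toMonoidHom,
    permToSymplectic_injective.comp (Equiv.permCongrHom e).injective⟩

/-- `Γ(Sp₆(2)) = Γ(S₈)`: the same primes divide `|Sp₆(2)|` and `8!`, and for all
distinct primes `r, s`, `Sp₆(2)` has an element of order `r * s` iff `S₈` does. -/
theorem prime_graph_Sp6_2_eq_S8 :
    (∀ t : ℕ, t.Prime →
      (t ∣ Nat.card (Matrix.symplecticGroup (Fin 3) (ZMod 2)) ↔ t ∣ Nat.factorial 8)) ∧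
    (∀ r s : ℕ, r.Prime → s.Prime → r ≠ s →
      ((∃ x : Matrix.symplecticGroup (Fin 3) (ZMod 2), orderOf x = r * s) ↔
        (∃ y : Equiv.Perm (Fin 8), orderOf y = r * s))) := by
  obtain ⟨φ, hφ⟩ := exists_perm_eight_injective_symplecticGroup
  refine ⟨fun t ht => ⟨fun h => ?_, fun h => ?_⟩, fun r s hr hs hrs => ⟨?_, ?_⟩⟩
  · exact ht.dvd_factorial.mpr
      ((le_seven_of_prime_dvd_natCard_symplecticGroup ht h).trans (by norm_num))
  · have hperm : Nat.card (Equiv.Perm (Fin 8)) = Nat.factorial 8 := by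
      rw [Nat.card_perm, Nat.card_fin]
    exact (hperm ▸ h).trans (Subgroup.card_dvd_of_injective φ hφ)
  · rintro ⟨x, hx⟩
    refine exists_perm_orderOf_eq_mul hr.two_le hs.two_le ((Nat.coprime_primes hr hs).mpr hrs) ?_
    rw [Fintype.card_fin]
    exact add_le_eight_of_orderOf_symplecticGroup hr hs hrs hx
  · rintro ⟨y, hy⟩
    exact ⟨φ y, (orderOf_injective φ hφ y).trans hy⟩
end

section
/- Let G be the quotient of Sp_4(3) = Matrix.symplecticGroup (Fin 2) (ZMod 3) by its center (so G ≅ PSp_4(3) ≅ U_4(2)). Then Γ(G) = Γ(S_6), where S_6 = Equiv.Perm (Fin 6). Explicitly: a prime divides |G| iff it divides 6!, and for all distinct primes r, s, G has an element of order r·s iff S_6 has an element of order r·s. -/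
/-!
The prime graph of a finite group depends only on the squarefree orders of its elements: by
Cauchy's theorem the vertices are the prime orders, and the edges are the orders `r * s`. In both
`PSp₄(3)` and `S₆` these are the squarefree divisors of `6` and of `5`. It is enough to find
elements of orders `6` and `5`, and to see that every order divides a power of `6` or equals `5`.
For `S₆` the cycle type decides. The characteristic polynomial of `M ∈ Sp₄(3)` is a palindromic
quartic; over `𝔽₃` it either splits into factors `X² - cX + 1`, or is `X⁴ + 1` or the minimal
polynomial of a primitive 5th or 10th root of unity, so `M ^ 6 ^ 3 = 1` or `M ^ 5 = ±1`.
-/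

open Matrix Polynomial

section SquarefreeOrders

/-- The squarefree part of the spectrum of `G`, i.e. of its set of element orders. It determines
the prime graph of a finite group. -/
def squarefreeOrders (G : Type*) [Monoid G] : Set ℕ :=
  {d | Squarefree d ∧ ∃ x : G, orderOf x = d}

theorem prime_mem_squarefreeOrders_iff {G : Type*} [Group G] [Finite G] {p : ℕ} (hp : p.Prime) :
    p ∈ squarefreeOrders G ↔ p ∣ Nat.card G := by
  have : Fact p.Prime := ⟨hp⟩
  refine ⟨?_, fun h => ⟨hp.squarefree, exists_prime_orderOf_dvd_card' p h⟩⟩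
  rintro ⟨-, x, rfl⟩
  exact orderOf_dvd_natCard x

variable {G : Type*} [Monoid G]

theorem mul_mem_squarefreeOrders_iff {r s : ℕ} (hr : r.Prime) (hs : s.Prime) (hrs : r ≠ s) :
    r * s ∈ squarefreeOrders G ↔ ∃ x : G, orderOf x = r * s :=
  and_iff_right <|
    (Nat.squarefree_mul ((Nat.coprime_primes hr hs).2 hrs)).2 ⟨hr.squarefree, hs.squarefree⟩

theorem squarefreeOrders_eq_of_orderOf_dvd_pow {m n k l : ℕ} (hm0 : m ≠ 0) (hn0 : n ≠ 0)
    (hm : ∃ x : G, orderOf x = m) (hn : ∃ x : G, orderOf x = n)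
    (h : ∀ x : G, orderOf x ∣ m ^ k ∨ orderOf x ∣ n ^ l) :
    squarefreeOrders G = {d | Squarefree d ∧ (d ∣ m ∨ d ∣ n)} := by
  ext d
  refine and_congr_right fun hd => ⟨?_, ?_⟩
  · rintro ⟨x, rfl⟩
    exact (h x).imp (hd.isRadical _ _) (hd.isRadical _ _)
  · obtain ⟨x, rfl⟩ := hm
    obtain ⟨y, rfl⟩ := hn
    rintro (hdx | hdy)
    · exact ⟨_, orderOf_pow_orderOf_div hm0 hdx⟩
    · exact ⟨_, orderOf_pow_orderOf_div hn0 hdy⟩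

end SquarefreeOrders

section SymmetricGroup

theorem cycleType_eq_singleton_of_mem {α : Type*} [Fintype α] [DecidableEq α] {σ : Equiv.Perm α}
    {c : ℕ} (hc : c ∈ σ.cycleType) (hα : Fintype.card α < c + 2) : σ.cycleType = {c} := by
  obtain ⟨t, ht⟩ := Multiset.exists_cons_of_mem hc
  have hsum : c + t.sum ≤ Fintype.card α := by
    rw [← Multiset.sum_cons, ← ht, σ.sum_cycleType]
    exact Finset.card_le_univ _
  have ht0 : t = 0 := Multiset.eq_zero_of_forall_notMem fun e he => by
    have he2 := Equiv.Perm.two_le_of_mem_cycleType (ht ▸ Multiset.mem_cons_of_mem he)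
    have hesum := Multiset.le_sum_of_mem he
    lia
  rw [ht, ht0, Multiset.cons_zero]

theorem orderOf_perm_fin_six_dvd (σ : Equiv.Perm (Fin 6)) :
    orderOf σ ∣ 6 ^ 3 ∨ orderOf σ ∣ 5 := by
  rw [← σ.lcm_cycleType]
  by_cases h5 : 5 ∈ σ.cycleType
  · right
    rw [cycleType_eq_singleton_of_mem h5 (by simp), Multiset.lcm_singleton, normalize_eq]
  · left
    refine Multiset.lcm_dvd.2 fun c hc => ?_
    have hc2 : 2 ≤ c := Equiv.Perm.two_le_of_mem_cycleType hc
    have hc6 : c ≤ 6 := calc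
      c ≤ σ.support.card := σ.sum_cycleType ▸ Multiset.le_sum_of_mem hc
      _ ≤ 6 := Finset.card_le_univ _
    have hc5 : c ≠ 5 := fun h => h5 (h ▸ hc)
    interval_cases c <;> first | contradiction | norm_num

theorem squarefreeOrders_perm_fin_six :
    squarefreeOrders (Equiv.Perm (Fin 6)) = {d | Squarefree d ∧ (d ∣ 6 ∨ d ∣ 5)} := by
  have h6 : orderOf (finRotate 6) = 6 := by
    rw [← Equiv.Perm.lcm_cycleType, cycleType_finRotate, Multiset.lcm_singleton, normalize_eq]
  have : Fact (Nat.Prime 5) := ⟨Nat.prime_five⟩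
  have h5 : ∃ σ : Equiv.Perm (Fin 6), orderOf σ = 5 :=
    exists_prime_orderOf_dvd_card' 5 (by rw [Nat.card_perm, Nat.card_fin]; decide)
  exact squarefreeOrders_eq_of_orderOf_dvd_pow (k := 3) (l := 1) (by decide) (by decide) ⟨_, h6⟩ h5
    (by simpa only [pow_one] using orderOf_perm_fin_six_dvd)

end SymmetricGroup

section PalindromicQuartic

/-- The general monic palindromic quartic `X⁴ + aX³ + bX² + aX + 1`. -/
noncomputable def palindromicQuartic {R : Type*} [Semiring R] (a b : R) : R[X] :=
  X ^ 4 + C a * X ^ 3 + C b * X ^ 2 + C a * X + 1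

theorem eq_palindromicQuartic_of_reverse_eq {R : Type*} [Semiring R] {f : R[X]} (hf : f.Monic)
    (hdeg : f.natDegree = 4) (hrev : f.reverse = f) :
    f = palindromicQuartic (f.coeff 3) (f.coeff 2) := by
  have hcoeff (i : ℕ) (hi : i ≤ 4) : f.coeff i = f.coeff (4 - i) := by
    conv_lhs => rw [← hrev, coeff_reverse, hdeg, revAt_le hi]
  have h4 : f.coeff 4 = 1 := hdeg ▸ hf.coeff_natDegree
  have h0 : f.coeff 0 = 1 := (hcoeff 0 (by simp)).trans h4
  have h1 : f.coeff 1 = f.coeff 3 := hcoeff 1 (by simp)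
  conv_lhs => rw [f.as_sum_range_C_mul_X_pow, hdeg]
  simp only [palindromicQuartic, Finset.sum_range_succ, Finset.sum_range_zero, h0, h1, h4, map_one,
    pow_zero, pow_one, one_mul, mul_one, zero_add]
  abel

theorem palindromicQuartic_eq_mul {R : Type*} [CommRing R] (c d : R) :
    palindromicQuartic (-(c + d)) (c * d + 2) =
      (X ^ 2 - C c * X + 1) * (X ^ 2 - C d * X + 1) := by
  simp only [palindromicQuartic, map_neg, map_add, map_mul, map_ofNat]
  ring

theorem palindromic_quadratic_dvd (c : ZMod 3) :
    (X ^ 2 - C c * X + 1 : (ZMod 3)[X]) ∣ (X ^ 8 - 1) ^ 2 := by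
  have h3 : (3 : (ZMod 3)[X]) = 0 := CharP.cast_eq_zero (ZMod 3)[X] 3
  have hc : c = 0 ∨ c = 1 ∨ c = -1 := by decide +revert
  rcases hc with rfl | rfl | rfl
  · have hdvd : (X ^ 2 + 1 : (ZMod 3)[X]) ∣ X ^ 8 - 1 := ⟨(X ^ 2 - 1) * (X ^ 4 + 1), by ring⟩
    simpa only [map_zero, zero_mul, sub_zero] using hdvd.trans (dvd_pow_self _ two_ne_zero)
  · have hsq : (X ^ 2 - C 1 * X + 1 : (ZMod 3)[X]) = (X + 1) ^ 2 := by
      rw [map_one]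
      linear_combination -X * h3
    have hdvd : (X + 1 : (ZMod 3)[X]) ∣ X ^ 8 - 1 :=
      ⟨(X - 1) * (X ^ 2 + 1) * (X ^ 4 + 1), by ring⟩
    exact hsq ▸ pow_dvd_pow_of_dvd hdvd 2
  · have hsq : (X ^ 2 - C (-1) * X + 1 : (ZMod 3)[X]) = (X - 1) ^ 2 := by
      rw [map_neg, map_one]
      linear_combination X * h3
    exact hsq ▸ pow_dvd_pow_of_dvd (sub_one_dvd_pow_sub_one X 8) 2

theorem palindromicQuartic_dvd (a b : ZMod 3) :
    palindromicQuartic a b ∣ X ^ 6 ^ 3 - 1 ∨ palindromicQuartic a b ∣ X ^ 5 - 1 ∨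
      palindromicQuartic a b ∣ X ^ 5 + 1 := by
  have hfrob : (X ^ 6 ^ 3 - 1 : (ZMod 3)[X]) = (X ^ 8 - 1) ^ 3 ^ 3 := by
    rw [sub_pow_char_pow, one_pow, ← pow_mul, show 6 ^ 3 = 8 * 3 ^ 3 from rfl]
  -- With `y = x + x⁻¹` the quartic becomes `y² + ay + (b - 2)`, which either has its roots `c, d`
  -- in `𝔽₃` or is one of the three monic irreducible quadratics.
  have hcases : (∃ c d, a = -(c + d) ∧ b = c * d + 2) ∨ (a = 0 ∧ b = 0) ∨ (a = 1 ∧ b = 1) ∨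
      (a = -1 ∧ b = 1) := by decide +revert
  rcases hcases with ⟨c, d, rfl, rfl⟩ | ⟨rfl, rfl⟩ | ⟨rfl, rfl⟩ | ⟨rfl, rfl⟩
  · left
    rw [hfrob, palindromicQuartic_eq_mul]
    calc (X ^ 2 - C c * X + 1) * (X ^ 2 - C d * X + 1)
      _ ∣ (X ^ 8 - 1) ^ 2 * (X ^ 8 - 1) ^ 2 :=
        mul_dvd_mul (palindromic_quadratic_dvd c) (palindromic_quadratic_dvd d)
      _ ∣ (X ^ 8 - 1) ^ 3 ^ 3 := by
        rw [← pow_add]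
        exact pow_dvd_pow _ (by norm_num)
  · left
    have hdvd : palindromicQuartic (0 : ZMod 3) 0 ∣ X ^ 8 - 1 :=
      ⟨X ^ 4 - 1, by simp only [palindromicQuartic, map_zero]; ring⟩
    rw [hfrob]
    exact hdvd.trans (dvd_pow_self _ (by norm_num))
  · exact .inr <| .inl ⟨X - 1, by simp only [palindromicQuartic, map_one]; ring⟩
  · exact .inr <| .inr ⟨X + 1, by simp only [palindromicQuartic, map_neg, map_one]; ring⟩

end PalindromicQuartic

section SymplecticGroup

theorem reverse_charpoly_of_mem_symplecticGroup {l R : Type*} [DecidableEq l] [Fintype l]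
    [CommRing R] {M : Matrix (l ⊕ l) (l ⊕ l) R} (hM : M ∈ symplecticGroup l R) :
    M.charpoly.reverse = M.charpoly := by
  have hdet : M.det = 1 := SymplecticGroup.det_eq_one hM
  have hunit : IsUnit M := by
    rw [Matrix.isUnit_iff_isUnit_det, hdet]
    exact isUnit_one
  have hinv : M⁻¹.charpoly = M.charpoly := by
    rw [SymplecticGroup.inv_eq_symplectic_inv M hM, mul_assoc, charpoly_mul_comm, mul_assoc,
      mul_neg, J_squared, neg_neg, mul_one, charpoly_transpose]
  have hrev := Matrix.charpoly_inv M hunit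
  rw [hinv, hdet] at hrev
  rw [reverse_charpoly]
  simpa using hrev.symm

theorem pow_eq_one_of_mem_symplecticGroup {M : Matrix (Fin 2 ⊕ Fin 2) (Fin 2 ⊕ Fin 2) (ZMod 3)}
    (hM : M ∈ symplecticGroup (Fin 2) (ZMod 3)) :
    M ^ 6 ^ 3 = 1 ∨ M ^ 5 = 1 ∨ M ^ 5 = -1 := by
  have hf := eq_palindromicQuartic_of_reverse_eq M.charpoly_monic
    (by simp [charpoly_natDegree_eq_dim]) (reverse_charpoly_of_mem_symplecticGroup hM)
  have haeval {q : (ZMod 3)[X]} (hq : palindromicQuartic _ _ ∣ q) : aeval M q = 0 :=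
    aeval_eq_zero_of_dvd_aeval_eq_zero (hf ▸ hq) (aeval_self_charpoly M)
  rcases palindromicQuartic_dvd (M.charpoly.coeff 3) (M.charpoly.coeff 2) with h | h | h
  · left
    simpa [sub_eq_zero] using haeval h
  · right; left
    simpa [sub_eq_zero] using haeval h
  · right; right
    simpa [eq_neg_iff_add_eq_zero] using haeval h

/-- The projective symplectic group `PSp(2|l|, R)`, the quotient of the symplectic group by its
center. -/
abbrev ProjectiveSymplecticGroup (l R : Type*) [DecidableEq l] [Fintype l] [CommRing R] :=
  symplecticGroup l R ⧸ Subgroup.center (symplecticGroup l R)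

theorem orderOf_projectiveSymplecticGroup_dvd (x : ProjectiveSymplecticGroup (Fin 2) (ZMod 3)) :
    orderOf x ∣ 6 ^ 3 ∨ orderOf x ∣ 5 := by
  induction x using QuotientGroup.induction_on with | H M
  simp only [orderOf_dvd_iff_pow_eq_one, ← QuotientGroup.mk_pow, QuotientGroup.eq_one_iff]
  rcases pow_eq_one_of_mem_symplecticGroup M.2 with h | h | h
  · left
    rw [show M ^ 6 ^ 3 = 1 from Subtype.ext h]
    exact one_mem _
  · right
    rw [show M ^ 5 = 1 from Subtype.ext h]
    exact one_mem _
  · right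
    refine Subgroup.mem_center_iff.2 fun g => Subtype.ext ?_
    simp [h]

theorem orderOf_mk_center_eq_prime {G : Type*} [Group G] {p : ℕ} [Fact p.Prime] {g h : G}
    (hpow : g ^ p = 1) (hgh : g * h ≠ h * g) : orderOf (g : G ⧸ Subgroup.center G) = p := by
  refine orderOf_eq_prime ?_ ?_
  · rw [← QuotientGroup.mk_pow, hpow, QuotientGroup.mk_one]
  · rw [Ne, QuotientGroup.eq_one_iff, Subgroup.mem_center_iff]
    exact fun hg => hgh (hg h).symm

/-- The symplectic transvection along the first vector of the standard symplectic basis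
`e₁, e₂, f₁, f₂`. -/
def symplecticTransvection : symplecticGroup (Fin 2) (ZMod 3) :=
  ⟨fromBlocks 1 !![1, 0; 0, 0] 0 1, by rw [SymplecticGroup.fromBlocks_mem_iff]; decide⟩

/-- The symplectic involution that negates the hyperbolic plane spanned by `e₂` and `f₂` and fixes
`e₁` and `f₁`. -/
def symplecticInvolution : symplecticGroup (Fin 2) (ZMod 3) :=
  ⟨fromBlocks !![1, 0; 0, -1] 0 0 !![1, 0; 0, -1], by
    rw [SymplecticGroup.fromBlocks_mem_iff]; decide⟩

/-- A symplectic matrix of order `5`: its characteristic polynomial is the fifth cyclotomic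
polynomial. -/
def symplecticOrderFive : symplecticGroup (Fin 2) (ZMod 3) :=
  ⟨fromBlocks 0 (-1) 1 !![-1, -1; -1, 0], by rw [SymplecticGroup.fromBlocks_mem_iff]; decide⟩

theorem exists_orderOf_projectiveSymplecticGroup_eq_five :
    ∃ x : ProjectiveSymplecticGroup (Fin 2) (ZMod 3), orderOf x = 5 := by
  have : Fact (Nat.Prime 5) := ⟨Nat.prime_five⟩
  exact ⟨symplecticOrderFive, orderOf_mk_center_eq_prime (h := symplecticInvolution)
    (by decide +kernel) (by decide +kernel)⟩

theorem exists_orderOf_projectiveSymplecticGroup_eq_six :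
    ∃ x : ProjectiveSymplecticGroup (Fin 2) (ZMod 3), orderOf x = 6 := by
  let t : ProjectiveSymplecticGroup (Fin 2) (ZMod 3) := symplecticTransvection
  let i : ProjectiveSymplecticGroup (Fin 2) (ZMod 3) := symplecticInvolution
  have ht : orderOf t = 3 := orderOf_mk_center_eq_prime (h := symplecticOrderFive)
    (by decide +kernel) (by decide +kernel)
  have hi : orderOf i = 2 := orderOf_mk_center_eq_prime (h := symplecticOrderFive)
    (by decide +kernel) (by decide +kernel)
  have hcomm : Commute symplecticTransvection symplecticInvolution := by
    unfold Commute SemiconjBy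
    decide +kernel
  have hti : Commute t i := hcomm.map (QuotientGroup.mk' _)
  refine ⟨t * i, ?_⟩
  rw [hti.orderOf_mul_eq_mul_orderOf_of_coprime (by rw [ht, hi]; norm_num), ht, hi]

theorem squarefreeOrders_projectiveSymplecticGroup :
    squarefreeOrders (ProjectiveSymplecticGroup (Fin 2) (ZMod 3)) =
      {d | Squarefree d ∧ (d ∣ 6 ∨ d ∣ 5)} :=
  squarefreeOrders_eq_of_orderOf_dvd_pow (k := 3) (l := 1) (by decide) (by decide)
    exists_orderOf_projectiveSymplecticGroup_eq_six
    exists_orderOf_projectiveSymplecticGroup_eq_five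
    (by simpa only [pow_one] using orderOf_projectiveSymplecticGroup_dvd)

end SymplecticGroup

/-- `Γ(PSp₄(3)) = Γ(S₆)` (the row `(U₄(2), Sp₄(2))` of Table 1, using
`U₄(2) ≅ PSp₄(3)` and `Sp₄(2) ≅ S₆`): the same primes divide `|PSp₄(3)|` and `6!`,
and for all distinct primes `r, s`, `PSp₄(3)` has an element of order `r * s` iff
`S₆` does. -/
theorem prime_graph_PSp4_3_eq_S6 :
    (∀ t : ℕ, t.Prime →
      (t ∣ Nat.card (Matrix.symplecticGroup (Fin 2) (ZMod 3) ⧸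
          Subgroup.center (Matrix.symplecticGroup (Fin 2) (ZMod 3))) ↔
        t ∣ Nat.factorial 6)) ∧
    (∀ r s : ℕ, r.Prime → s.Prime → r ≠ s →
      ((∃ x : Matrix.symplecticGroup (Fin 2) (ZMod 3) ⧸
          Subgroup.center (Matrix.symplecticGroup (Fin 2) (ZMod 3)), orderOf x = r * s) ↔
        (∃ y : Equiv.Perm (Fin 6), orderOf y = r * s))) := by
  have h : squarefreeOrders (ProjectiveSymplecticGroup (Fin 2) (ZMod 3)) =
      squarefreeOrders (Equiv.Perm (Fin 6)) :=
    squarefreeOrders_projectiveSymplecticGroup.trans squarefreeOrders_perm_fin_six.symm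
  refine ⟨fun t ht => ?_, fun r s hr hs hrs => ?_⟩
  · have hcard : Nat.card (Equiv.Perm (Fin 6)) = Nat.factorial 6 := by
      rw [Nat.card_perm, Nat.card_fin]
    rw [← prime_mem_squarefreeOrders_iff ht, h, prime_mem_squarefreeOrders_iff ht, hcard]
  · rw [← mul_mem_squarefreeOrders_iff hr hs hrs, h, mul_mem_squarefreeOrders_iff hr hs hrs]
end
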